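/- arXiv:1806.04256 — 2 statements merged into one kernel-verified Lean document; each statement's English description precedes it below -/
import Mathlib

section
/- Let f : {±1}^k → {±1} and let p ∈ (0,1]. If T ⊆ [k] is a random subset including each coordinate independently with probability p, then E_T[Var[Bias_T f]] ≤ p·Var[f]; moreover, if p ≤ 1/3 then E_T[Var[Bias_T f]] ≤ Var[f]^{3/2}. -/
open Finset

/-- Uniform-distribution expectation of `f` over a finite type. -/
noncomputable def uexp {α : Type*} [Fintype α] (f : α → ℝ) : ℝ :=
  (∑ x : α, f x) / (Fintype.card α : ℝ)

/-- Variance under the uniform distribution. -/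
noncomputable def uvar {α : Type*} [Fintype α] (f : α → ℝ) : ℝ :=
  uexp (fun x => f x ^ 2) - (uexp f) ^ 2

open Classical in
/-- Real-valued indicator of a proposition. -/
noncomputable def ind (P : Prop) : ℝ := if P then 1 else 0

/-- `sel T x y` agrees with `x` on `T` and with `y` outside of `T`. -/
def sel {n : ℕ} (T : Finset (Fin n)) (x y : Fin n → Bool) : Fin n → Bool :=
  fun i => if i ∈ T then x i else y i

/-- The bias function of `f` with respect to the set `T` of live coordinates. -/
noncomputable def biasFn {n : ℕ} (T : Finset (Fin n)) (f : (Fin n → Bool) → ℝ) :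
    (Fin n → Bool) → ℝ :=
  fun x => uexp (fun y : Fin n → Bool => f (sel T x y))

/-- A layered read-once branching program of width `w` and length `n`.
`V i` is the set of vertices of layer `i`; the Boolean `true` corresponds to the
edge label `1` and `false` to the edge label `-1`; the program outputs `-1` iff it
accepts. -/
structure ROBP (w n : ℕ) where
  V : Fin (n + 1) → Finset (Fin w)
  V_nonempty : ∀ i, (V i).Nonempty
  start : Fin w
  start_mem : start ∈ V 0
  trans : Fin n → Bool → Fin w → Fin w
  trans_mem : ∀ (i : Fin n) (b : Bool) (v : Fin w), v ∈ V i.castSucc → trans i b v ∈ V i.succ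
  accept : Fin w → Bool

namespace ROBP

variable {w n : ℕ}

/-- The state reached at layer `j` when starting from state `v` at layer `i`. -/
def runTo (B : ROBP w n) (x : Fin n → Bool) (v : Fin w) (i j : ℕ) : Fin w :=
  if h : i < j ∧ i < n then runTo B x (B.trans ⟨i, h.2⟩ (x ⟨i, h.2⟩) v) (i + 1) j else v
termination_by j - i
decreasing_by omega

/-- The final state on input `x`, starting from the start vertex. -/
def run (B : ROBP w n) (x : Fin n → Bool) : Fin w := B.runTo x B.start 0 n

/-- The `±1` value computed by `B` on `x` (`-1` means accept). -/
noncomputable def eval (B : ROBP w n) (x : Fin n → Bool) : ℝ :=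
  if B.accept (B.run x) then -1 else 1

/-- Probability (over a uniformly random input) of reaching vertex `v` at layer `j`. -/
noncomputable def reachProb (B : ROBP w n) (j : ℕ) (v : Fin w) : ℝ :=
  uexp (fun x : Fin n → Bool => if B.runTo x B.start 0 j = v then (1 : ℝ) else 0)

/-- Acceptance probability starting from vertex `v` at layer `i`, on a uniform input. -/
noncomputable def beta (B : ROBP w n) (i : ℕ) (v : Fin w) : ℝ :=
  uexp (fun x : Fin n → Bool => if B.accept (B.runTo x v i n) then (1 : ℝ) else 0)

/-- Layer `i` of edges is colliding: two distinct vertices of layer `i` have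
equally-labeled edges entering the same vertex of layer `i+1`. -/
def Colliding (B : ROBP w n) (i : Fin n) : Prop :=
  ∃ (b : Bool) (u v : Fin w), u ∈ B.V i.castSucc ∧ v ∈ B.V i.castSucc ∧ u ≠ v ∧
    B.trans i b u = B.trans i b v

/-- The number of colliding layers of `B`. -/
noncomputable def collidingCount (B : ROBP w n) : ℕ :=
  Nat.card {i : Fin n // B.Colliding i}

/-- The value of `B` on `x` when all vertices of `V 0` are interpreted as start
vertices: the average of the `±1` outcomes of the corresponding computation paths. -/
noncomputable def avgEval (B : ROBP w n) (x : Fin n → Bool) : ℝ :=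
  (∑ v ∈ B.V 0, (if B.accept (B.runTo x v 0 n) then (-1 : ℝ) else 1)) / ((B.V 0).card : ℝ)

/-- The averaged value of the suffix of `B` starting at layer `t`, whose start-vertex
set is `V t`. -/
noncomputable def suffixEval (B : ROBP w n) (t : Fin (n + 1)) (x : Fin n → Bool) : ℝ :=
  (∑ v ∈ B.V t, (if B.accept (B.runTo x v (t : ℕ) n) then (-1 : ℝ) else 1)) /
    ((B.V t).card : ℝ)

/-- `B` is a `(w, ℓ, m)`-ROBP: it can be written as a concatenation of `m` consecutive
blocks, each block boundary layer having at most `2` vertices and each block having at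
most `ℓ` colliding layers. -/
def IsDecomp (B : ROBP w n) (ℓ m : ℕ) : Prop :=
  ∃ cut : Fin (m + 1) → Fin (n + 1),
    Monotone cut ∧ cut 0 = 0 ∧ cut (Fin.last m) = Fin.last n ∧
    (∀ j, (B.V (cut j)).card ≤ 2) ∧
    (∀ j : Fin m,
      Nat.card {i : Fin n //
        (cut j.castSucc : ℕ) ≤ (i : ℕ) ∧ (i : ℕ) < (cut j.succ : ℕ) ∧ B.Colliding i} ≤ ℓ)

end ROBP

/-- `G` is a pseudorandom generator that `ε`-fools the real-valued function `f`. -/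
def fools {r n : ℕ} (G : (Fin r → Bool) → (Fin n → Bool)) (f : (Fin n → Bool) → ℝ)
    (ε : ℝ) : Prop :=
  |uexp f - uexp (fun s => f (G s))| ≤ ε

/-- Expectation of `f` under the distribution with mass function `μ`. -/
noncomputable def dExp {α : Type*} [Fintype α] (μ f : α → ℝ) : ℝ :=
  ∑ x : α, μ x * f x

/-- Expectation over a `p`-random subset `T ⊆ [n]` (each coordinate kept in `T`
independently with probability `p`). -/
noncomputable def rpExpect (n : ℕ) (p : ℝ) (g : Finset (Fin n) → ℝ) : ℝ :=
  ∑ T : Finset (Fin n), p ^ T.card * (1 - p) ^ (n - T.card) * g T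

/-!
Expanding in the Walsh basis, `E_T[Var[Bias_T f]] = ∑_{S ≠ ∅} p ^ |S| * f̂(S) ^ 2`, the noise
stability `Stab_p` of `g = f - E f`. Bounding `p ^ |S| ≤ p` gives the first inequality. For the
second, put `h = ∑_S p ^ |S| * ĝ(S) * χ_S`, so that `E[g h] = Stab_p g`, while Bonami's lemma gives
`E[h ^ 4] ≤ (Stab_p g) ^ 2` for `p ≤ 1 / 3`. Two applications of Cauchy–Schwarz,
`E[g h] ^ 2 ≤ E|g| * E[|g| h ^ 2]` and `E[|g| h ^ 2] ^ 2 ≤ E[g ^ 2] * E[h ^ 4]`, yield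
`Stab_p g ≤ E|g| * √(E[g ^ 2])` for every real-valued `f`. A `±1`-valued `f` has
`E|f - E f| = Var f`, and the right-hand side becomes `(Var f) ^ (3 / 2)`.
-/

open Fintype (balance balance_apply expect_balance)
open scoped BigOperators

section Expectation

variable {α : Type*} [Fintype α]

lemma uexp_eq_expect (f : α → ℝ) : uexp f = 𝔼 x, f x :=
  (Fintype.expect_eq_sum_div_card f).symm

lemma uvar_eq_expect_balance_sq [Nonempty α] (f : α → ℝ) :
    uvar f = 𝔼 x, balance f x ^ 2 := by
  simp only [uvar, uexp_eq_expect, balance_apply, sub_sq, expect_add_distrib,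
    expect_sub_distrib, ← expect_mul, ← mul_expect, Fintype.expect_const]
  ring

lemma uvar_nonneg [Nonempty α] (f : α → ℝ) : 0 ≤ uvar f := by
  rw [uvar_eq_expect_balance_sq]
  exact expect_nonneg fun x _ ↦ sq_nonneg _

lemma sq_expect_le_expect_mul_expect_of_sq_le_mul {ι R : Type*} [Field R] [LinearOrder R]
    [IsStrictOrderedRing R] (s : Finset ι) {r f g : ι → R} (hf : ∀ i ∈ s, 0 ≤ f i)
    (hg : ∀ i ∈ s, 0 ≤ g i) (h : ∀ i ∈ s, r i ^ 2 ≤ f i * g i) :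
    (𝔼 i ∈ s, r i) ^ 2 ≤ (𝔼 i ∈ s, f i) * 𝔼 i ∈ s, g i := by
  simp only [expect_eq_sum_div_card, div_pow, div_mul_div_comm, ← sq]
  gcongr
  exact sum_sq_le_sum_mul_sum_of_sq_le_mul s hf hg h

end Expectation

section Sign

variable {α : Type*} [Fintype α] {f : α → ℝ}

/- Since `|E f| ≤ 1`, the number `f x * (f x - E f) = 1 - f x * E f` is nonnegative. -/
lemma abs_sub_expect_of_sign (hf : ∀ x, f x = 1 ∨ f x = -1) (x : α) :
    |f x - 𝔼 y, f y| = 1 - f x * 𝔼 y, f y := by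
  have : Nonempty α := ⟨x⟩
  have hle : 𝔼 y, f y ≤ 1 :=
    expect_le univ_nonempty fun y _ ↦ by rcases hf y with h | h <;> norm_num [h]
  have hge : -1 ≤ 𝔼 y, f y :=
    le_expect univ_nonempty fun y _ ↦ by rcases hf y with h | h <;> norm_num [h]
  rcases hf x with h | h <;> rw [h]
  · rw [abs_of_nonneg (by linarith), one_mul]
  · rw [abs_of_nonpos (by linarith)]
    ring

lemma uexp_abs_sub_uexp_of_sign [Nonempty α] (hf : ∀ x, f x = 1 ∨ f x = -1) :
    uexp (fun x ↦ |f x - uexp f|) = uvar f := by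
  have hsq : ∀ x, f x ^ 2 = 1 := fun x ↦ sq_eq_one_iff.mpr (hf x)
  simp only [uvar, uexp_eq_expect, abs_sub_expect_of_sign hf, hsq, expect_sub_distrib, ← expect_mul,
    Fintype.expect_const, sq]

lemma uexp_abs_sub_uexp_mul_sqrt_uvar_of_sign [Nonempty α] (hf : ∀ x, f x = 1 ∨ f x = -1) :
    uexp (fun x ↦ |f x - uexp f|) * √(uvar f) = uvar f ^ ((3 : ℝ) / 2) := by
  rw [uexp_abs_sub_uexp_of_sign hf, Real.sqrt_eq_rpow, ← Real.rpow_one_add' (uvar_nonneg f)]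
    <;> norm_num

end Sign

section Walsh

variable {ι : Type*}

/-- The bit `b` as a sign, in the encoding of the Boolean cube by `Bool` in which `true` stands
for `-1`. -/
def boolSign (b : Bool) : ℝ := if b then -1 else 1

lemma boolSign_not (b : Bool) : boolSign (!b) = -boolSign b := by
  cases b <;> simp [boolSign]

lemma boolSign_sq (b : Bool) : boolSign b ^ 2 = 1 := by
  cases b <;> simp [boolSign]

lemma one_add_boolSign_mul_boolSign (b c : Bool) :
    1 + boolSign b * boolSign c = if b = c then 2 else 0 := by
  cases b <;> cases c <;> norm_num [boolSign]

/-- The Walsh function (character of the Boolean cube) `χ_S`. -/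
def walsh (S : Finset ι) (x : ι → Bool) : ℝ := ∏ i ∈ S, boolSign (x i)

lemma walsh_congr {S : Finset ι} {x y : ι → Bool} (h : ∀ i ∈ S, x i = y i) :
    walsh S x = walsh S y :=
  prod_congr rfl fun i hi ↦ by rw [h i hi]

lemma sum_walsh_mul_walsh [Fintype ι] (x y : ι → Bool) :
    ∑ S, walsh S x * walsh S y = if x = y then 2 ^ Fintype.card ι else 0 := by
  calc ∑ S, walsh S x * walsh S y
      = ∏ i, (1 + boolSign (x i) * boolSign (y i)) := by
        simp only [prod_one_add, powerset_univ, walsh, prod_mul_distrib]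
    _ = if x = y then 2 ^ Fintype.card ι else 0 := by
        simp only [one_add_boolSign_mul_boolSign, Fintype.prod_ite_zero, prod_const, card_univ,
          funext_iff]

variable [DecidableEq ι]

lemma walsh_insert {i : ι} {S : Finset ι} (hi : i ∉ S) (x : ι → Bool) :
    walsh (insert i S) x = boolSign (x i) * walsh S x :=
  prod_insert hi

/-- Negation of the `i`-th coordinate of a point of the Boolean cube. -/
def flipBit (i : ι) (x : ι → Bool) : ι → Bool := Function.update x i (!x i)

lemma flipBit_self (i : ι) (x : ι → Bool) : flipBit i x i = !x i :=
  Function.update_self i _ x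

lemma flipBit_of_ne {i j : ι} (h : j ≠ i) (x : ι → Bool) : flipBit i x j = x j :=
  Function.update_of_ne h _ x

lemma flipBit_involutive (i : ι) : Function.Involutive (flipBit i) := fun x ↦ by
  simp [flipBit]

lemma walsh_flipBit_of_notMem {i : ι} {S : Finset ι} (hi : i ∉ S) (x : ι → Bool) :
    walsh S (flipBit i x) = walsh S x :=
  walsh_congr fun _ hj ↦ flipBit_of_ne (ne_of_mem_of_not_mem hj hi) x

lemma walsh_flipBit_of_mem {i : ι} {S : Finset ι} (hi : i ∈ S) (x : ι → Bool) :
    walsh S (flipBit i x) = -walsh S x := by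
  rw [← insert_erase hi, walsh_insert (notMem_erase i S), walsh_insert (notMem_erase i S),
    flipBit_self, boolSign_not, walsh_flipBit_of_notMem (notMem_erase i S), neg_mul]

variable [Fintype ι]

lemma expect_eq_zero_of_flipBit_eq_neg (i : ι) {F : (ι → Bool) → ℝ}
    (hF : ∀ x, F (flipBit i x) = -F x) : 𝔼 x, F x = 0 := by
  have h : 𝔼 x, -F x = 𝔼 x, F x :=
    Fintype.expect_equiv (flipBit_involutive i).toPerm _ _ fun x ↦ (hF x).symm
  rw [expect_neg_distrib] at h
  linarith

/-- The Walsh–Fourier coefficient `f̂(S) = E[f χ_S]`. -/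
noncomputable def walshCoeff (f : (ι → Bool) → ℝ) (S : Finset ι) : ℝ := 𝔼 x, f x * walsh S x

lemma walshCoeff_empty (f : (ι → Bool) → ℝ) : walshCoeff f ∅ = 𝔼 x, f x := by
  simp only [walshCoeff, walsh, prod_empty, mul_one]

lemma sum_walshCoeff_mul_walsh (f : (ι → Bool) → ℝ) (y : ι → Bool) :
    ∑ S, walshCoeff f S * walsh S y = f y := by
  calc ∑ S, walshCoeff f S * walsh S y
      = 𝔼 x, f x * ∑ S, walsh S x * walsh S y := by
        simp only [walshCoeff, expect_mul, mul_assoc, ← expect_sum_comm, mul_sum]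
    _ = f y := by
        simp only [sum_walsh_mul_walsh, Fintype.expect_eq_sum_div_card, mul_ite, mul_zero,
          sum_ite_eq', mem_univ, if_true, Fintype.card_fun, Fintype.card_bool, Nat.cast_pow,
          Nat.cast_ofNat]
        exact mul_div_cancel_right₀ _ (by positivity)

lemma expect_mul_sum_mul_walsh (f : (ι → Bool) → ℝ) (a : Finset ι → ℝ) :
    𝔼 x, f x * ∑ S, a S * walsh S x = ∑ S, a S * walshCoeff f S := by
  simp only [mul_sum, expect_sum_comm, walshCoeff, mul_expect, mul_left_comm]

lemma expect_sq_eq_sum_walshCoeff_sq (f : (ι → Bool) → ℝ) :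
    𝔼 x, f x ^ 2 = ∑ S, walshCoeff f S ^ 2 := by
  simpa only [sum_walshCoeff_mul_walsh, ← sq] using expect_mul_sum_mul_walsh f (walshCoeff f)

end Walsh

section Bonami

variable {ι : Type*} [DecidableEq ι]

lemma sum_powerset_insert_pow_card_mul {R : Type*} [CommSemiring R] {i : ι} {U : Finset ι}
    (hi : i ∉ U) (r : R) (w : Finset ι → R) :
    ∑ S ∈ (insert i U).powerset, r ^ #S * w S =
      ∑ S ∈ U.powerset, r ^ #S * w S + r * ∑ S ∈ U.powerset, r ^ #S * w (insert i S) := by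
  rw [sum_powerset_insert hi, mul_sum]
  congr 1
  refine sum_congr rfl fun S hS ↦ ?_
  rw [card_insert_of_notMem (notMem_of_mem_powerset_of_notMem hS hi), pow_succ', mul_assoc]

lemma sum_powerset_insert_mul_walsh {i : ι} {U : Finset ι} (hi : i ∉ U) (a : Finset ι → ℝ)
    (x : ι → Bool) :
    ∑ S ∈ (insert i U).powerset, a S * walsh S x =
      ∑ S ∈ U.powerset, a S * walsh S x +
        boolSign (x i) * ∑ S ∈ U.powerset, a (insert i S) * walsh S x := by
  rw [sum_powerset_insert hi, mul_sum]
  congr 1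
  refine sum_congr rfl fun S hS ↦ ?_
  rw [walsh_insert (notMem_of_mem_powerset_of_notMem hS hi), mul_left_comm]

variable [Fintype ι]

lemma expect_add_boolSign_mul_pow_four (i : ι) {G H : (ι → Bool) → ℝ}
    (hG : ∀ x, G (flipBit i x) = G x) (hH : ∀ x, H (flipBit i x) = H x) :
    𝔼 x, (G x + boolSign (x i) * H x) ^ 4 =
      𝔼 x, G x ^ 4 + 6 * 𝔼 x, G x ^ 2 * H x ^ 2 + 𝔼 x, H x ^ 4 := by
  have hexpand : ∀ x, (G x + boolSign (x i) * H x) ^ 4 =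
      G x ^ 4 + 6 * (G x ^ 2 * H x ^ 2) + H x ^ 4 +
        boolSign (x i) * (4 * G x ^ 3 * H x + 4 * G x * H x ^ 3) := fun x ↦ by
    linear_combination (6 * G x ^ 2 * H x ^ 2 + 4 * boolSign (x i) * G x * H x ^ 3 +
      (boolSign (x i) ^ 2 + 1) * H x ^ 4) * boolSign_sq (x i)
  have hodd : 𝔼 x, boolSign (x i) * (4 * G x ^ 3 * H x + 4 * G x * H x ^ 3) = 0 :=
    expect_eq_zero_of_flipBit_eq_neg i fun x ↦ by
      rw [hG, hH, flipBit_self, boolSign_not, neg_mul]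
  simp only [hexpand, expect_add_distrib, ← mul_expect, hodd, add_zero]

lemma expect_add_boolSign_mul_pow_four_le (i : ι) {G H : (ι → Bool) → ℝ}
    (hG : ∀ x, G (flipBit i x) = G x) (hH : ∀ x, H (flipBit i x) = H x) {A B : ℝ}
    (hA : 0 ≤ A) (hB : 0 ≤ B) (hGA : 𝔼 x, G x ^ 4 ≤ A ^ 2) (hHB : 𝔼 x, H x ^ 4 ≤ B ^ 2) :
    𝔼 x, (G x + boolSign (x i) * H x) ^ 4 ≤ (A + 3 * B) ^ 2 := by
  have hH_nonneg : 0 ≤ 𝔼 x, H x ^ 4 := expect_nonneg fun x _ ↦ by positivity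
  have hcross : 𝔼 x, G x ^ 2 * H x ^ 2 ≤ A * B := by
    refine le_of_sq_le_sq ?_ (mul_nonneg hA hB)
    calc (𝔼 x, G x ^ 2 * H x ^ 2) ^ 2
        ≤ (𝔼 x, G x ^ 4) * 𝔼 x, H x ^ 4 :=
          sq_expect_le_expect_mul_expect_of_sq_le_mul univ (fun x _ ↦ by positivity)
            (fun x _ ↦ by positivity) fun x _ ↦ le_of_eq (by ring)
      _ ≤ A ^ 2 * B ^ 2 := by gcongr
      _ = (A * B) ^ 2 := (mul_pow A B 2).symm
  rw [expect_add_boolSign_mul_pow_four i hG hH]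
  linarith [sq_nonneg B]

lemma expect_sum_powerset_mul_walsh_pow_four_le (U : Finset ι) (a : Finset ι → ℝ) :
    𝔼 x, (∑ S ∈ U.powerset, a S * walsh S x) ^ 4 ≤
      (∑ S ∈ U.powerset, 3 ^ #S * a S ^ 2) ^ 2 := by
  induction U using Finset.induction_on generalizing a with
  | empty =>
    simp only [powerset_empty, sum_singleton, walsh, prod_empty, card_empty, mul_one, pow_zero,
      one_mul, Fintype.expect_const]
    exact (pow_mul (a ∅) 2 2).le
  | insert i U hi ih =>
    have hinv (b : Finset ι → ℝ) (x : ι → Bool) :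
        ∑ S ∈ U.powerset, b S * walsh S (flipBit i x) = ∑ S ∈ U.powerset, b S * walsh S x :=
      sum_congr rfl fun S hS ↦ by
        rw [walsh_flipBit_of_notMem (notMem_of_mem_powerset_of_notMem hS hi)]
    simp only [sum_powerset_insert_mul_walsh hi, sum_powerset_insert_pow_card_mul hi]
    exact expect_add_boolSign_mul_pow_four_le i (hinv a) (hinv fun S ↦ a (insert i S))
      (sum_nonneg fun S _ ↦ by positivity) (sum_nonneg fun S _ ↦ by positivity)
      (ih a) (ih fun S ↦ a (insert i S))

end Bonami

section NoiseStability

variable {ι : Type*} [DecidableEq ι] [Fintype ι] {ρ : ℝ}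

/-- The noise operator `T_ρ`, defined as a multiplier in the Walsh basis. -/
noncomputable def noiseOp (ρ : ℝ) (g : (ι → Bool) → ℝ) (x : ι → Bool) : ℝ :=
  ∑ S, ρ ^ #S * walshCoeff g S * walsh S x

/-- The noise stability `Stab_ρ[g]`, given by its Walsh expansion; it equals `E[g * T_ρ g]` by
`expect_mul_noiseOp`. -/
noncomputable def noiseStability (ρ : ℝ) (g : (ι → Bool) → ℝ) : ℝ :=
  ∑ S, ρ ^ #S * walshCoeff g S ^ 2

lemma expect_mul_noiseOp (ρ : ℝ) (g : (ι → Bool) → ℝ) :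
    𝔼 x, g x * noiseOp ρ g x = noiseStability ρ g :=
  (expect_mul_sum_mul_walsh g fun S ↦ ρ ^ #S * walshCoeff g S).trans <|
    sum_congr rfl fun S _ ↦ by rw [mul_assoc, ← sq]

lemma noiseStability_nonneg (hρ : 0 ≤ ρ) (g : (ι → Bool) → ℝ) : 0 ≤ noiseStability ρ g :=
  sum_nonneg fun S _ ↦ by positivity

lemma noiseStability_le_mul_expect_sq (hρ₀ : 0 ≤ ρ) (hρ₁ : ρ ≤ 1) {g : (ι → Bool) → ℝ}
    (hg : 𝔼 x, g x = 0) : noiseStability ρ g ≤ ρ * 𝔼 x, g x ^ 2 := by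
  rw [expect_sq_eq_sum_walshCoeff_sq, mul_sum]
  refine sum_le_sum fun S _ ↦ ?_
  obtain rfl | hS := S.eq_empty_or_nonempty
  · simp [walshCoeff_empty, hg]
  · gcongr
    exact pow_le_of_le_one hρ₀ hρ₁ hS.card_ne_zero

lemma expect_noiseOp_pow_four_le (hρ₀ : 0 ≤ ρ) (hρ₁ : ρ ≤ 1 / 3) (g : (ι → Bool) → ℝ) :
    𝔼 x, noiseOp ρ g x ^ 4 ≤ noiseStability ρ g ^ 2 := by
  have hweight (S : Finset ι) :
      3 ^ #S * (ρ ^ #S * walshCoeff g S) ^ 2 ≤ ρ ^ #S * walshCoeff g S ^ 2 := by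
    calc 3 ^ #S * (ρ ^ #S * walshCoeff g S) ^ 2
        = (3 * ρ) ^ #S * (ρ ^ #S * walshCoeff g S ^ 2) := by rw [mul_pow]; ring
      _ ≤ ρ ^ #S * walshCoeff g S ^ 2 :=
        mul_le_of_le_one_left (by positivity) (pow_le_one₀ (by positivity) (by linarith))
  calc 𝔼 x, noiseOp ρ g x ^ 4
      ≤ (∑ S, 3 ^ #S * (ρ ^ #S * walshCoeff g S) ^ 2) ^ 2 := by
        simpa only [powerset_univ, noiseOp] using expect_sum_powerset_mul_walsh_pow_four_le univ
          fun S ↦ ρ ^ #S * walshCoeff g S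
    _ ≤ noiseStability ρ g ^ 2 :=
        pow_le_pow_left₀ (sum_nonneg fun S _ ↦ by positivity)
          (sum_le_sum fun S _ ↦ hweight S) 2

lemma noiseStability_le_expect_abs_mul_sqrt (hρ₀ : 0 ≤ ρ) (hρ₁ : ρ ≤ 1 / 3)
    (g : (ι → Bool) → ℝ) :
    noiseStability ρ g ≤ (𝔼 x, |g x|) * √(𝔼 x, g x ^ 2) := by
  set h := noiseOp ρ g
  set Q := noiseStability ρ g
  have hQ : 0 ≤ Q := noiseStability_nonneg hρ₀ g
  have hg : 0 ≤ 𝔼 x, |g x| := expect_nonneg fun x _ ↦ abs_nonneg _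
  have hsq : Q ^ 2 ≤ (𝔼 x, |g x|) * 𝔼 x, |g x| * h x ^ 2 := by
    rw [show Q = 𝔼 x, g x * h x from (expect_mul_noiseOp ρ g).symm]
    refine sq_expect_le_expect_mul_expect_of_sq_le_mul univ (fun x _ ↦ by positivity)
      (fun x _ ↦ by positivity) fun x _ ↦ le_of_eq ?_
    rw [mul_pow, ← sq_abs (g x)]
    ring
  have hweighted : 𝔼 x, |g x| * h x ^ 2 ≤ √(𝔼 x, g x ^ 2) * Q := by
    rw [← Real.sqrt_sq hQ, ← Real.sqrt_mul' _ (sq_nonneg Q)]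
    refine Real.le_sqrt_of_sq_le ?_
    calc (𝔼 x, |g x| * h x ^ 2) ^ 2
        ≤ (𝔼 x, g x ^ 2) * 𝔼 x, h x ^ 4 :=
          sq_expect_le_expect_mul_expect_of_sq_le_mul univ (fun x _ ↦ by positivity)
            (fun x _ ↦ by positivity) fun x _ ↦ by rw [mul_pow, sq_abs, ← pow_mul]
      _ ≤ (𝔼 x, g x ^ 2) * Q ^ 2 :=
          mul_le_mul_of_nonneg_left (expect_noiseOp_pow_four_le hρ₀ hρ₁ g)
            (expect_nonneg fun x _ ↦ sq_nonneg _)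
  rcases hQ.eq_or_lt with hQ₀ | hQ_pos
  · rw [← hQ₀]
    positivity
  · refine le_of_mul_le_mul_right ?_ hQ_pos
    calc Q * Q = Q ^ 2 := (sq Q).symm
      _ ≤ (𝔼 x, |g x|) * 𝔼 x, |g x| * h x ^ 2 := hsq
      _ ≤ (𝔼 x, |g x|) * (√(𝔼 x, g x ^ 2) * Q) := mul_le_mul_of_nonneg_left hweighted hg
      _ = (𝔼 x, |g x|) * √(𝔼 x, g x ^ 2) * Q := (mul_assoc _ _ _).symm

end NoiseStability

section Bias

variable {n : ℕ}

lemma biasFn_eq_expect (T : Finset (Fin n)) (f : (Fin n → Bool) → ℝ) (x : Fin n → Bool) :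
    biasFn T f x = 𝔼 y, f (sel T x y) :=
  uexp_eq_expect _

/- Exchanging the coordinates in `T` between `x` and `y` is an involution of the square of the
cube. -/
lemma expect_biasFn (T : Finset (Fin n)) (f : (Fin n → Bool) → ℝ) :
    𝔼 x, biasFn T f x = 𝔼 x, f x := by
  have hswap : Function.Involutive
      fun z : (Fin n → Bool) × (Fin n → Bool) ↦ (sel T z.1 z.2, sel T z.2 z.1) := fun z ↦ by
    ext i <;> by_cases hi : i ∈ T <;> simp [sel, hi]
  calc 𝔼 x, biasFn T f x
      = 𝔼 z : (Fin n → Bool) × (Fin n → Bool), f (sel T z.1 z.2) := by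
        simp only [biasFn_eq_expect, ← univ_product_univ, expect_product]
    _ = 𝔼 z : (Fin n → Bool) × (Fin n → Bool), f z.1 :=
        Fintype.expect_equiv hswap.toPerm _ _ fun _ ↦ rfl
    _ = 𝔼 x, f x := by
        simp only [← univ_product_univ, expect_product, Fintype.expect_const]

lemma balance_biasFn (T : Finset (Fin n)) (f : (Fin n → Bool) → ℝ) :
    balance (biasFn T f) = biasFn T (balance f) := by
  ext x
  rw [balance_apply, expect_biasFn]
  simp only [balance_apply, biasFn_eq_expect, expect_sub_distrib, Fintype.expect_const]

lemma biasFn_mul_of_forall_sel {T : Finset (Fin n)} {w : (Fin n → Bool) → ℝ}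
    (hw : ∀ x y, w (sel T x y) = w x) (f : (Fin n → Bool) → ℝ) (x : Fin n → Bool) :
    biasFn T (fun z ↦ f z * w z) x = biasFn T f x * w x := by
  simp only [biasFn_eq_expect, hw, expect_mul]

lemma sel_flipBit_of_notMem {T : Finset (Fin n)} {i : Fin n} (hi : i ∉ T)
    (x y : Fin n → Bool) : sel T (flipBit i x) y = sel T x y := by
  funext j
  by_cases hj : j ∈ T
  · simp only [sel, hj, if_true, flipBit_of_ne (ne_of_mem_of_not_mem hj hi)]
  · simp only [sel, hj, if_false]

lemma walsh_sel_of_subset {S T : Finset (Fin n)} (h : S ⊆ T) (x y : Fin n → Bool) :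
    walsh S (sel T x y) = walsh S x :=
  walsh_congr fun _ hi ↦ if_pos (h hi)

lemma walshCoeff_biasFn (T : Finset (Fin n)) (f : (Fin n → Bool) → ℝ) (S : Finset (Fin n)) :
    walshCoeff (biasFn T f) S = if S ⊆ T then walshCoeff f S else 0 := by
  split_ifs with h
  · simp only [walshCoeff, ← biasFn_mul_of_forall_sel (walsh_sel_of_subset h), expect_biasFn]
  · obtain ⟨i, hiS, hiT⟩ := not_subset.mp h
    refine expect_eq_zero_of_flipBit_eq_neg i fun x ↦ ?_
    simp only [biasFn_eq_expect, sel_flipBit_of_notMem hiT, walsh_flipBit_of_mem hiS, mul_neg]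

lemma expect_biasFn_sq (T : Finset (Fin n)) (f : (Fin n → Bool) → ℝ) :
    𝔼 x, biasFn T f x ^ 2 = ∑ S, walshCoeff f S ^ 2 * if S ⊆ T then 1 else 0 := by
  simp only [expect_sq_eq_sum_walshCoeff_sq, walshCoeff_biasFn, ite_pow, mul_ite, mul_one,
    mul_zero, zero_pow two_ne_zero]

lemma uvar_biasFn (T : Finset (Fin n)) (f : (Fin n → Bool) → ℝ) :
    uvar (biasFn T f) = 𝔼 x, biasFn T (balance f) x ^ 2 := by
  rw [uvar_eq_expect_balance_sq, balance_biasFn]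

end Bias

section RandomSubset

variable {n : ℕ}

lemma rpExpect_sum_mul {κ : Type*} (s : Finset κ) (p : ℝ) (c : κ → ℝ)
    (g : κ → Finset (Fin n) → ℝ) :
    rpExpect n p (fun T ↦ ∑ j ∈ s, c j * g j T) = ∑ j ∈ s, c j * rpExpect n p (g j) := by
  simp only [rpExpect, mul_sum]
  rw [sum_comm]
  simp only [mul_left_comm]

/- Expand `p ^ |S| = ∏ i, (p + (1 - p) * 1[i ∉ S])`: the term of `T` vanishes unless `S ⊆ T`. -/
lemma rpExpect_ite_subset (p : ℝ) (S : Finset (Fin n)) :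
    rpExpect n p (fun T ↦ if S ⊆ T then 1 else 0) = p ^ #S := by
  have hterm (T : Finset (Fin n)) :
      p ^ #T * (1 - p) ^ (n - #T) * (if S ⊆ T then 1 else 0) =
        (∏ _i ∈ T, p) * ∏ i ∈ univ \ T, (1 - p) * if i ∉ S then 1 else 0 := by
    have hsub : (∀ i ∈ univ \ T, i ∉ S) ↔ S ⊆ T := by
      simp only [mem_sdiff, mem_univ, true_and, subset_iff, not_imp_not]
    simp only [prod_mul_distrib, prod_const, prod_boole, hsub, card_univ_sdiff, Fintype.card_fin,
      mul_assoc]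
  calc rpExpect n p (fun T ↦ if S ⊆ T then 1 else 0)
      = ∏ i, (p + (1 - p) * if i ∉ S then 1 else 0) := by
        simp only [rpExpect, hterm, prod_add, powerset_univ]
    _ = ∏ i, if i ∈ S then p else 1 :=
        prod_congr rfl fun i _ ↦ by by_cases hi : i ∈ S <;> simp [hi]
    _ = p ^ #S := by simp only [Fintype.prod_ite_mem, prod_const]

lemma rpExpect_uvar_biasFn (p : ℝ) (f : (Fin n → Bool) → ℝ) :
    rpExpect n p (fun T ↦ uvar (biasFn T f)) = noiseStability p (balance f) := by
  simp only [uvar_biasFn, expect_biasFn_sq, rpExpect_sum_mul, rpExpect_ite_subset, noiseStability]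
  exact sum_congr rfl fun S _ ↦ mul_comm _ _

end RandomSubset

theorem hypercontractivity_of_variance_general {n : ℕ} (f : (Fin n → Bool) → ℝ) {p : ℝ}
    (hp₀ : 0 ≤ p) (hp₁ : p ≤ 1) :
    rpExpect n p (fun T ↦ uvar (biasFn T f)) ≤ p * uvar f ∧
    (p ≤ 1 / 3 →
      rpExpect n p (fun T ↦ uvar (biasFn T f)) ≤
        uexp (fun x ↦ |f x - uexp f|) * √(uvar f)) := by
  simp only [rpExpect_uvar_biasFn, uvar_eq_expect_balance_sq f, uexp_eq_expect, ← balance_apply]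
  exact ⟨noiseStability_le_mul_expect_sq hp₀ hp₁ (expect_balance f),
    fun hp₃ ↦ noiseStability_le_expect_abs_mul_sqrt hp₀ hp₃ _⟩

/-- Hyper-contractivity of the variance: for Boolean
`f : {±1}^k → {±1}` and a `p`-random subset `T`,
`E_T[Var[Bias_T f]] ≤ p · Var[f]`, and moreover `E_T[Var[Bias_T f]] ≤ Var[f]^(3/2)`
whenever `p ≤ 1/3`. -/
theorem hypercontractivity_of_variance
    (k : ℕ) (f : (Fin k → Bool) → ℝ) (hf : ∀ x, f x = 1 ∨ f x = -1)
    (p : ℝ) (hp0 : 0 < p) (hp1 : p ≤ 1) :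
    rpExpect k p (fun T => uvar (biasFn T f)) ≤ p * uvar f ∧
    (p ≤ 1 / 3 →
      rpExpect k p (fun T => uvar (biasFn T f)) ≤ uvar f ^ ((3 : ℝ) / 2)) := by
  rw [← uexp_abs_sub_uexp_mul_sqrt_uvar_of_sign hf]
  exact hypercontractivity_of_variance_general f hp0.le hp1
end

section
/- For any C ≥ 1 the following holds. Any (3,ℓ,m)-ROBP B can be written (as a real-valued function) as B = B' + E where B' is a (3,ℓ,C^ℓ)-ROBP and either E ≡ 0, or for every x, |E(x)| ≤ F(x) where F(x) = ∧_{i=1}^{C^ℓ} ¬F_i(x) and the F_i are non-zero {0,1}-valued events, defined on pairwise disjoint sets of variables, each computable by a (3,ℓ,1)-ROBP. -/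
open Finset

/-- The `{0,1}`-valued event `F` is computed by a `(3, ℓ, 1)`-ROBP reading (distinct)
variables from the set `S`. -/
def Event31 (ℓ : ℕ) {n : ℕ} (S : Finset (Fin n)) (F : (Fin n → Bool) → Prop) : Prop :=
  ∃ (k : ℕ) (σ : Fin k → Fin n), Function.Injective σ ∧ (∀ j, σ j ∈ S) ∧
    ∃ D : ROBP 3 k, D.IsDecomp ℓ 1 ∧
      ∀ x, F x ↔ D.accept (D.run (fun j => x (σ j))) = true

/-!
A block without an input that merges the computation paths from its two start vertices is replaced
by a collision-free block computing the same map: its two paths never meet, so in a layer of width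
three any two input prefixes have a vertex in common, and whether changing the remaining bits
swaps the two outcomes does not depend on the prefix. Every block is thus collision-free or
merging, and collision-free blocks are absorbed into the next merging block. If fewer than
`M = C ^ ℓ` merging blocks arise, they decompose the program and the error is zero. Otherwise
keep the last `M` of them: the error of discarding the prefix vanishes as soon as one of these
blocks merges its paths. The event that the two paths of a merging block have met by the first
possible time is computed with no more collisions than in the block: until then, the pair of their
vertices is encoded by the third vertex of the layer.
-/

theorem eq_of_ne_of_card_le_two {α : Type*} {s : Finset α} {p q r : α} (hs : #s ≤ 2)
    (hp : p ∈ s) (hq : q ∈ s) (hr : r ∈ s) (hqp : q ≠ p) (hrp : r ≠ p) : q = r := by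
  by_contra hqr
  exact hs.not_gt (two_lt_card.2 ⟨p, hp, q, hq, r, hr, hqp.symm, hrp.symm, hqr⟩)

theorem exists_forall_eq_or_eq_of_card_le_two {α : Type*} {s : Finset α} (hs : #s ≤ 2)
    (hne : s.Nonempty) : ∃ p ∈ s, ∃ q ∈ s, ∀ r ∈ s, r = p ∨ r = q := by
  obtain ⟨p, hp⟩ := hne
  by_cases hq : ∃ q ∈ s, q ≠ p
  · obtain ⟨q, hq, hqp⟩ := hq
    exact ⟨p, hp, q, hq, fun r hr => or_iff_not_imp_left.2 fun hrp =>
      eq_of_ne_of_card_le_two hs hp hr hq hrp hqp⟩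
  · push Not at hq
    exact ⟨p, hp, p, hp, fun r hr => Or.inl (hq r hr)⟩

namespace ROBP

section Runs

variable {w n : ℕ} (B : ROBP w n) (x y : Fin n → Bool) (v : Fin w) {a i j k : ℕ}

/-- The vertex set of layer `i`, extended to all `i : ℕ` by repeating the last layer. -/
def layer (i : ℕ) : Finset (Fin w) := B.V ⟨min i n, by omega⟩

theorem layer_coe (i : Fin (n + 1)) : B.layer i = B.V i := by
  simp only [layer, min_eq_left (Nat.le_of_lt_succ i.2)]

theorem layer_of_le (h : i ≤ n) : B.layer i = B.V ⟨i, by omega⟩ :=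
  B.layer_coe ⟨i, by omega⟩

theorem layer_nonempty (i : ℕ) : (B.layer i).Nonempty := B.V_nonempty _

theorem runTo_of_le (h : j ≤ i) : B.runTo x v i j = v := by
  rw [runTo, dif_neg (by omega)]

theorem runTo_of_length_le (h : n ≤ i) : B.runTo x v i j = v := by
  rw [runTo, dif_neg (by omega)]

theorem runTo_succ (h : i < n) : B.runTo x v i (i + 1) = B.trans ⟨i, h⟩ (x ⟨i, h⟩) v := by
  rw [runTo, dif_pos ⟨i.lt_succ_self, h⟩, runTo_of_le _ _ _ le_rfl]

theorem runTo_runTo (hij : i ≤ j) (hjk : j ≤ k) :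
    B.runTo x (B.runTo x v i j) j k = B.runTo x v i k := by
  fun_induction runTo B x v i j with
  | case1 v i h ih =>
    rw [ih (by omega), runTo.eq_1 B x v i k, dif_pos ⟨by omega, h.2⟩]
  | case2 v i h =>
    obtain rfl | hlt := hij.eq_or_lt
    · rfl
    · rw [runTo_of_length_le _ _ _ (by omega), runTo_of_length_le _ _ _ (by omega)]

variable {B v} in
theorem runTo_mem (hij : i ≤ j) (hv : v ∈ B.layer i) : B.runTo x v i j ∈ B.layer j := by
  induction j, hij using Nat.le_induction with
  | base => rwa [runTo_of_le _ _ _ le_rfl]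
  | succ j hij ih =>
    rw [← runTo_runTo _ _ _ hij j.le_succ]
    by_cases hj : j < n
    · rw [layer_of_le _ hj.le] at ih
      rw [runTo_succ _ _ _ hj, layer_of_le _ hj]
      exact B.trans_mem ⟨j, hj⟩ _ _ ih
    · rw [runTo_of_length_le _ _ _ (by omega)]
      simpa only [layer, min_eq_right (not_lt.1 hj), min_eq_right (le_add_right (not_lt.1 hj))]
        using ih

variable {x y} in
theorem runTo_congr_input (h : ∀ l : Fin n, i ≤ l → (l : ℕ) < j → x l = y l) :
    B.runTo x v i j = B.runTo y v i j := by
  fun_induction runTo B x v i j with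
  | case1 v i hi ih =>
    rw [ih fun l hl => h l (by omega), h ⟨i, hi.2⟩ le_rfl hi.1, runTo.eq_1 B y v i j, dif_pos hi]
  | case2 v i hi => rw [runTo, dif_neg hi]

/-- The input that reads `x` in the layers before `a` and `y` from layer `a` on. -/
def splice (a : ℕ) (x y : Fin n → Bool) : Fin n → Bool := fun i => if i < a then x i else y i

theorem runTo_splice_of_le (hja : j ≤ a) : B.runTo (splice a x y) v i j = B.runTo x v i j :=
  B.runTo_congr_input v fun _ _ hl => if_pos (hl.trans_le hja)

theorem runTo_splice (hia : i ≤ a) (haj : a ≤ j) :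
    B.runTo (splice a x y) v i j = B.runTo y (B.runTo x v i a) a j := by
  rw [← runTo_runTo _ _ _ hia haj, runTo_splice_of_le _ _ _ _ le_rfl]
  exact B.runTo_congr_input _ fun _ hl _ => if_neg hl.not_gt

theorem splice_self : splice a x x = x := by
  funext i
  simp only [splice, ite_self]

variable {x} in
theorem splice_splice {z : Fin n → Bool} (h : i ≤ j) :
    splice i x (splice j x z) = splice j x z := by
  funext k
  simp only [splice]
  split_ifs <;> first | rfl | omega

end Runs

section Blocks

variable {w n : ℕ} (B : ROBP w n) {a b c i : ℕ}

/-- Collision at layer `i : ℕ`, phrased through one-step runs; no layer beyond the last one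
collides. -/
def CollidesAt (i : ℕ) : Prop :=
  ∃ x, ∃ u ∈ B.layer i, ∃ v ∈ B.layer i, u ≠ v ∧ B.runTo x u i (i + 1) = B.runTo x v i (i + 1)

theorem collidesAt_coe (i : Fin n) : B.CollidesAt i ↔ B.Colliding i := by
  have hi : B.layer i = B.V i.castSucc := B.layer_coe i.castSucc
  simp only [CollidesAt, Colliding, hi, runTo_succ _ _ _ i.2]
  constructor
  · rintro ⟨x, u, hu, v, hv, huv, h⟩
    exact ⟨x i, u, v, hu, hv, huv, h⟩
  · rintro ⟨β, u, v, hu, hv, huv, h⟩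
    exact ⟨fun _ => β, u, hu, v, hv, huv, h⟩

variable {B} in
theorem CollidesAt.lt (h : B.CollidesAt i) : i < n := by
  obtain ⟨x, u, -, v, -, huv, h⟩ := h
  by_contra! hi
  rw [runTo_of_length_le _ _ _ hi, runTo_of_length_le _ _ _ hi] at h
  exact huv h

open Classical in
/-- The colliding layers `i` with `a ≤ i < b`. -/
noncomputable def collisions (a b : ℕ) : Finset ℕ := {i ∈ Ico a b | B.CollidesAt i}

variable {B} in
theorem mem_collisions : i ∈ B.collisions a b ↔ (a ≤ i ∧ i < b) ∧ B.CollidesAt i := by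
  simp only [collisions, mem_filter, mem_Ico]

theorem natCard_colliding (a b : ℕ) :
    Nat.card {i : Fin n // a ≤ (i : ℕ) ∧ (i : ℕ) < b ∧ B.Colliding i} = #(B.collisions a b) := by
  rw [← Nat.card_eq_finsetCard]
  exact Nat.card_congr
    { toFun := fun i => ⟨i, mem_collisions.2 ⟨⟨i.2.1, i.2.2.1⟩, (B.collidesAt_coe i).2 i.2.2.2⟩⟩
      invFun := fun i =>
        have hi := mem_collisions.1 i.2
        ⟨⟨i, hi.2.lt⟩, hi.1.1, hi.1.2, (B.collidesAt_coe ⟨i, hi.2.lt⟩).1 hi.2⟩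
      left_inv := fun _ => rfl
      right_inv := fun _ => rfl }

theorem collisions_eq_empty_iff :
    B.collisions a b = ∅ ↔ ∀ i, a ≤ i → i < b → ¬ B.CollidesAt i := by
  simp only [Finset.eq_empty_iff_forall_notMem, mem_collisions, not_and, and_imp]

theorem collisions_self (a : ℕ) : B.collisions a a = ∅ := by
  simp only [collisions, Ico_self, filter_empty]

theorem collisions_union (hab : a ≤ b) (hbc : b ≤ c) :
    B.collisions a b ∪ B.collisions b c = B.collisions a c := by
  classical
  rw [collisions, collisions, collisions, ← filter_union, Ico_union_Ico_eq_Ico hab hbc]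

/-- The part of `B` between the layers `a` and `b` is a `(w, ℓ, 1)`-block. -/
structure IsBlock (ℓ a b : ℕ) : Prop where
  le : a ≤ b
  card_left_le : #(B.layer a) ≤ 2
  card_right_le : #(B.layer b) ≤ 2
  card_collisions_le : #(B.collisions a b) ≤ ℓ

/-- The relation of bounding a `(w, ℓ, 1)`-block; a decomposition of `B` is a series for it. -/
def blockRel (ℓ : ℕ) : SetRel ℕ ℕ := {ab | B.IsBlock ℓ ab.1 ab.2}

end Blocks

section Agreement

variable {w n : ℕ} {B B' : ROBP w n} {x : Fin n → Bool} {a b c d ℓ : ℕ}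

/-- All computation paths that start in layer `a` and read `x` have met by layer `b`. -/
def Merges (B : ROBP w n) (x : Fin n → Bool) (a b : ℕ) : Prop :=
  ∀ u ∈ B.layer a, ∀ v ∈ B.layer a, B.runTo x u a b = B.runTo x v a b

theorem Merges.mono (h : B.Merges x b c) (hab : a ≤ b) (hbc : b ≤ c) (hcd : c ≤ d) :
    B.Merges x a d := by
  intro u hu v hv
  rw [← runTo_runTo _ _ _ (hab.trans hbc) hcd, ← runTo_runTo _ _ v (hab.trans hbc) hcd,
    ← runTo_runTo _ _ _ hab hbc, ← runTo_runTo _ _ v hab hbc,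
    h _ (runTo_mem x hab hu) _ (runTo_mem x hab hv)]

/-- `B` and `B'` have the same vertices and the same edges between the layers `a` and `b`. -/
structure AgreeOn (B B' : ROBP w n) (a b : ℕ) : Prop where
  layer_eq : ∀ i, a ≤ i → i ≤ b → B.layer i = B'.layer i
  runTo_succ_eq : ∀ x v i, a ≤ i → i < b → B.runTo x v i (i + 1) = B'.runTo x v i (i + 1)

namespace AgreeOn

theorem mono (h : AgreeOn B B' a d) (hab : a ≤ b) (hcd : c ≤ d) : AgreeOn B B' b c where
  layer_eq i hi hi' := h.layer_eq i (hab.trans hi) (hi'.trans hcd)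
  runTo_succ_eq x v i hi hi' := h.runTo_succ_eq x v i (hab.trans hi) (hi'.trans_le hcd)

theorem runTo_eq (h : AgreeOn B B' a b) (x : Fin n → Bool) (v : Fin w) :
    B.runTo x v a b = B'.runTo x v a b := by
  obtain hba | hab := le_total b a
  · rw [runTo_of_le _ _ _ hba, runTo_of_le _ _ _ hba]
  induction b, hab using Nat.le_induction with
  | base => rw [runTo_of_le _ _ _ le_rfl, runTo_of_le _ _ _ le_rfl]
  | succ b hab ih =>
    rw [← runTo_runTo _ _ _ hab b.le_succ, ← runTo_runTo _ _ _ hab b.le_succ,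
      ih (h.mono le_rfl b.le_succ), h.runTo_succ_eq _ _ _ hab b.lt_succ_self]

theorem collisions_eq (h : AgreeOn B B' a b) : B.collisions a b = B'.collisions a b := by
  ext i
  rw [mem_collisions, mem_collisions]
  refine and_congr_right fun ⟨hai, hib⟩ => ?_
  simp only [CollidesAt, h.layer_eq i hai hib.le, h.runTo_succ_eq _ _ i hai hib]

theorem isBlock (h : AgreeOn B B' a b) (hB : B.IsBlock ℓ a b) : B'.IsBlock ℓ a b where
  le := hB.le
  card_left_le := h.layer_eq a le_rfl hB.le ▸ hB.card_left_le
  card_right_le := h.layer_eq b hB.le le_rfl ▸ hB.card_right_le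
  card_collisions_le := h.collisions_eq ▸ hB.card_collisions_le

theorem merges (h : AgreeOn B B' a b) (hab : a ≤ b) (hB : B.Merges x a b) :
    B'.Merges x a b := by
  simpa only [Merges, h.layer_eq a le_rfl hab, h.runTo_eq] using hB

end AgreeOn

end Agreement

section Decompositions

variable {w n : ℕ} {B : ROBP w n} {ℓ m M : ℕ}

theorem monotone_relSeries (p : RelSeries (B.blockRel ℓ)) : Monotone p :=
  Fin.monotone_iff_le_succ.2 fun i => (p.step i).le

theorem IsDecomp.exists_relSeries (h : B.IsDecomp ℓ m) :
    ∃ p : RelSeries (B.blockRel ℓ), p.length = m ∧ p.head = 0 ∧ p.last = n := by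
  obtain ⟨cut, hmono, h0, hlast, hcard, hcol⟩ := h
  refine ⟨⟨m, fun j => cut j, fun j => ⟨hmono j.castSucc_le_succ, ?_, ?_, ?_⟩⟩,
    rfl, congrArg Fin.val h0, congrArg Fin.val hlast⟩
  · exact (B.layer_coe _).symm ▸ hcard _
  · exact (B.layer_coe _).symm ▸ hcard _
  · exact (B.natCard_colliding _ _).symm.trans_le (hcol j)

theorem IsDecomp.card_layer_zero_le (h : B.IsDecomp ℓ m) : #(B.layer 0) ≤ 2 := by
  obtain ⟨cut, -, h0, -, hcard, -⟩ := h
  exact (B.layer_coe 0).symm ▸ h0 ▸ hcard 0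

theorem IsDecomp.card_layer_length_le (h : B.IsDecomp ℓ m) : #(B.layer n) ≤ 2 := by
  obtain ⟨cut, -, -, hlast, hcard, -⟩ := h
  exact (B.layer_coe (Fin.last n)).symm ▸ hlast ▸ hcard (Fin.last m)

theorem isDecomp_of_relSeries (p : RelSeries (B.blockRel ℓ)) (hhead : p.head = 0)
    (hlast : p.last = n) (hcard : #(B.layer n) ≤ 2) : B.IsDecomp ℓ p.length := by
  have hle (j) : p j ≤ n := (monotone_relSeries p (Fin.le_last j)).trans_eq hlast
  refine ⟨fun j => ⟨p j, Nat.lt_succ_of_le (hle j)⟩, fun _ _ h => monotone_relSeries p h,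
    Fin.ext hhead, Fin.ext hlast, fun j => ?_, fun j => ?_⟩
  · change #(B.V ⟨p j, _⟩) ≤ 2
    rw [← layer_of_le _ (hle j)]
    cases j using Fin.lastCases with
    | last => rwa [p.apply_last, hlast]
    | cast j => exact (p.step j).card_left_le
  · exact (B.natCard_colliding _ _).trans_le (p.step j).card_collisions_le

theorem isDecomp_cons (p : RelSeries (B.blockRel ℓ)) (h : B.IsBlock ℓ 0 p.head)
    (hlast : p.last = n) (hcard : #(B.layer n) ≤ 2) : B.IsDecomp ℓ (p.length + 1) := by
  rw [← p.cons_length 0 h]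
  exact isDecomp_of_relSeries (p.cons 0 h) (p.head_cons 0 h) ((p.last_cons 0 h).trans hlast) hcard

theorem IsBlock.isDecomp (h : B.IsBlock ℓ 0 n) : B.IsDecomp ℓ 1 :=
  isDecomp_cons (RelSeries.singleton _ n) h rfl h.card_right_le

theorem IsDecomp.succ (h : B.IsDecomp ℓ m) : B.IsDecomp ℓ (m + 1) := by
  obtain ⟨p, rfl, hhead, hlast⟩ := h.exists_relSeries
  have hcard := h.card_layer_zero_le
  refine isDecomp_cons p ⟨hhead.ge, hcard, by rwa [hhead], ?_⟩ hlast h.card_layer_length_le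
  rw [hhead, collisions_self]
  exact ℓ.zero_le

theorem IsDecomp.mono (h : B.IsDecomp ℓ m) (hmM : m ≤ M) : B.IsDecomp ℓ M :=
  Nat.le_induction h (fun _ _ => IsDecomp.succ) M hmM

end Decompositions

section Truncation

variable {w n : ℕ} (B : ROBP w n) (t : ℕ)

/-- The suffix of `B` from layer `t` on, preceded by layers of identity edges. -/
noncomputable def truncate : ROBP w n where
  V i := B.layer (max i t)
  V_nonempty _ := B.layer_nonempty _
  start := (B.layer_nonempty t).choose
  start_mem := by
    simpa only [Fin.val_zero, zero_le, sup_of_le_right] using (B.layer_nonempty t).choose_spec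
  trans i β v := if i < t then v else B.trans i β v
  trans_mem i β v hv := by
    rw [Fin.val_castSucc] at hv
    split_ifs with h
    · rw [max_eq_right h.le] at hv
      rwa [Fin.val_succ, max_eq_right (Nat.succ_le_of_lt h)]
    · rw [max_eq_left (not_lt.1 h)] at hv
      rw [Fin.val_succ, max_eq_left (by omega), ← B.runTo_succ (fun _ => β) v i.2]
      exact runTo_mem _ i.1.le_succ hv
  accept := B.accept

variable {t}

theorem layer_truncate (ht : t ≤ n) (i : ℕ) : (B.truncate t).layer i = B.layer (max i t) := by
  change B.layer _ = _
  rw [layer, layer]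
  congr 2
  simp only
  omega

theorem runTo_succ_truncate (x : Fin n → Bool) (v : Fin w) (i : ℕ) :
    (B.truncate t).runTo x v i (i + 1) = if i < t then v else B.runTo x v i (i + 1) := by
  obtain hi | hi := lt_or_ge i n
  · rw [runTo_succ _ _ _ hi, runTo_succ _ _ _ hi]
    rfl
  · rw [runTo_of_length_le _ _ _ hi, runTo_of_length_le _ _ _ hi, ite_self]

theorem agreeOn_truncate (ht : t ≤ n) : AgreeOn B (B.truncate t) t n where
  layer_eq i hi _ := by rw [layer_truncate _ ht, max_eq_left hi]
  runTo_succ_eq x v i hi _ := by rw [runTo_succ_truncate, if_neg hi.not_gt]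

theorem runTo_truncate (x : Fin n → Bool) (v : Fin w) {i : ℕ} (hi : i ≤ t) :
    (B.truncate t).runTo x v 0 i = v := by
  induction i with
  | zero => exact runTo_of_le _ _ _ le_rfl
  | succ i ih =>
    rw [← runTo_runTo _ _ _ i.zero_le i.le_succ, ih (by omega), runTo_succ_truncate,
      if_pos (Nat.lt_of_succ_le hi)]

theorem collisions_truncate : (B.truncate t).collisions 0 t = ∅ := by
  rw [collisions_eq_empty_iff]
  rintro i - hi ⟨x, u, -, v, -, huv, h⟩
  rw [runTo_succ_truncate, runTo_succ_truncate, if_pos hi, if_pos hi] at h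
  exact huv h

theorem isDecomp_truncate {ℓ : ℕ} {B : ROBP w n} (p : RelSeries (B.blockRel ℓ))
    (hp : p.length ≠ 0) (hlast : p.last = n) (hcard : #(B.layer n) ≤ 2) :
    (B.truncate p.head).IsDecomp ℓ p.length := by
  induction p using RelSeries.inductionOn with
  | singleton a => exact absurd rfl hp
  | cons p a h =>
    rw [p.last_cons] at hlast
    rw [p.head_cons, p.cons_length]
    have hmono := monotone_relSeries p
    have hle (k) : p k ≤ n := (hmono (Fin.le_last k)).trans_eq hlast
    have hhead : a ≤ p.head := h.le
    have hagree := B.agreeOn_truncate (hhead.trans (hle 0))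
    have hblock := (hagree.mono le_rfl (hle 0)).isBlock h
    refine isDecomp_cons ⟨p.length, p, fun j => ?_⟩ ⟨zero_le, ?_, hblock.card_right_le, ?_⟩ hlast ?_
    · exact (hagree.mono (hhead.trans (hmono (Fin.zero_le _))) (hle _)).isBlock (p.step j)
    · rw [layer_truncate _ (hhead.trans (hle 0)), max_eq_right a.zero_le]
      exact h.card_left_le
    · change #((B.truncate a).collisions 0 p.head) ≤ ℓ
      rw [← collisions_union _ a.zero_le hhead, collisions_truncate, empty_union]
      exact hblock.card_collisions_le
    · exact hagree.layer_eq n (hhead.trans (hle 0)) le_rfl ▸ hcard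

theorem avgEval_truncate (t : Fin (n + 1)) (x : Fin n → Bool) :
    (B.truncate t).avgEval x = B.suffixEval t x := by
  have ht : (t : ℕ) ≤ n := Nat.le_of_lt_succ t.2
  have hV : (B.truncate t).V 0 = B.V t := by
    rw [← layer_coe, ← layer_coe, layer_truncate _ ht, Fin.val_zero, max_eq_right t.1.zero_le]
  have hrun (v) : (B.truncate t).runTo x v 0 n = B.runTo x v t n := by
    rw [← runTo_runTo _ _ _ t.1.zero_le ht, runTo_truncate _ _ _ le_rfl,
      (B.agreeOn_truncate ht).runTo_eq]
  simp only [avgEval, suffixEval, hV, hrun]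
  rfl

end Truncation

section Replacement

variable {n : ℕ} {B : ROBP 3 n} {x x' y y' : Fin n → Bool} {u v : Fin 3} {a b i : ℕ}

/-- No input merges the two computation paths between the two-vertex layers `a` and `b`. -/
structure IsSeparated (B : ROBP 3 n) (a b : ℕ) : Prop where
  le : a ≤ b
  le_length : b ≤ n
  card_left : #(B.layer a) = 2
  card_right_le : #(B.layer b) ≤ 2
  injOn : ∀ x, Set.InjOn (B.runTo x · a b) (B.layer a)

/-- The input with bit `i` of `x` and all other bits `false`. -/
def probe (i : ℕ) (x : Fin n → Bool) : Fin n → Bool :=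
  splice i (fun _ => false) (splice (i + 1) x fun _ => false)

theorem probe_const (i : Fin n) : probe i (fun _ => x i) = probe i x := by
  funext j
  simp only [probe, splice]
  split_ifs with h₁ h₂
  · rfl
  · rw [show j = i by omega]
  · rfl

/-- The vertex of layer `a` from which the all-`false` input leads to the vertex `v` of
layer `b`; junk if there is none. -/
noncomputable def source (B : ROBP 3 n) (a b : ℕ) (v : Fin 3) : Fin 3 :=
  Function.invFunOn (B.runTo (fun _ => false) · a b) (B.layer a) v

namespace IsSeparated

theorem runTo_eq_of_runTo_eq (h : B.IsSeparated a b) (hu : u ∈ B.layer a) (hv : v ∈ B.layer a)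
    (hxy : B.runTo x u a b = B.runTo y u a b) : B.runTo x v a b = B.runTo y v a b := by
  obtain rfl | hvu := eq_or_ne v u
  · exact hxy
  refine eq_of_ne_of_card_le_two h.card_right_le (runTo_mem x h.le hu) (runTo_mem x h.le hv)
    (runTo_mem y h.le hv) ((h.injOn x).ne hv hu hvu) ?_
  rw [hxy]
  exact (h.injOn y).ne hv hu hvu

theorem runTo_eq_iff (h : B.IsSeparated a b) (hu : u ∈ B.layer a) (hv : v ∈ B.layer a) :
    B.runTo x u a b = B.runTo y u a b ↔ B.runTo x v a b = B.runTo y v a b :=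
  ⟨h.runTo_eq_of_runTo_eq hu hv, h.runTo_eq_of_runTo_eq hv hu⟩

theorem exists_runTo_eq (h : B.IsSeparated a b) (x x' : Fin n → Bool) (hai : a ≤ i)
    (hib : i ≤ b) :
    ∃ u ∈ B.layer a, ∃ v ∈ B.layer a, B.runTo x u a i = B.runTo x' v a i := by
  have hcard (x) : #((B.layer a).image (B.runTo x · a i)) = 2 := by
    rw [card_image_of_injOn, h.card_left]
    intro u hu v hv huv
    refine h.injOn x hu hv ?_
    simp only at huv ⊢
    rw [← runTo_runTo _ _ _ hai hib, huv, runTo_runTo _ _ _ hai hib]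
  obtain ⟨r, hr⟩ := inter_nonempty_of_card_lt_card_add_card
    (subset_univ ((B.layer a).image (B.runTo x · a i)))
    (subset_univ ((B.layer a).image (B.runTo x' · a i)))
    ((card_fin 3).trans_lt (by rw [hcard, hcard]; norm_num))
  obtain ⟨hr, hr'⟩ := mem_inter.1 hr
  obtain ⟨u, hu, hur⟩ := mem_image.1 hr
  obtain ⟨v, hv, hvr⟩ := mem_image.1 hr'
  exact ⟨u, hu, v, hv, hur.trans hvr.symm⟩

-- Two of the three vertices of layer `i` are reached with either of the two input prefixes, so some
-- vertex is reached with both.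
theorem runTo_splice_eq_iff (h : B.IsSeparated a b) (hu : u ∈ B.layer a) (hv : v ∈ B.layer a)
    (hai : a ≤ i) (hib : i ≤ b) :
    B.runTo (splice i x y) u a b = B.runTo (splice i x y') u a b ↔
      B.runTo (splice i x' y) v a b = B.runTo (splice i x' y') v a b := by
  obtain ⟨u', hu', v', hv', huv⟩ := h.exists_runTo_eq x x' hai hib
  rw [h.runTo_eq_iff hu hu', h.runTo_eq_iff hv hv']
  simp only [runTo_splice _ _ _ _ hai hib, huv]

theorem runTo_probe (h : B.IsSeparated a b) (hu : u ∈ B.layer a) (hv : v ∈ B.layer a)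
    (hai : a ≤ i) (hib : i < b)
    (huv : B.runTo (fun _ => false) u a b = B.runTo (splice i x fun _ => false) v a b) :
    B.runTo (probe i x) u a b = B.runTo (splice (i + 1) x fun _ => false) v a b := by
  have key := h.runTo_splice_eq_iff (x := fun _ => false) (x' := x)
    (y := splice (i + 1) x fun _ => false) (y' := fun _ => false) hu hv hai hib.le
  rw [splice_self, splice_splice i.le_succ, ← huv] at key
  obtain hp | hp := eq_or_ne (B.runTo (probe i x) u a b) (B.runTo (fun _ => false) u a b)
  · rw [hp, key.1 hp]
  · exact eq_of_ne_of_card_le_two h.card_right_le (runTo_mem _ h.le hu) (runTo_mem _ h.le hu)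
      (runTo_mem _ h.le hv) hp (mt key.2 hp)

theorem surjOn (h : B.IsSeparated a b) (x : Fin n → Bool) :
    Set.SurjOn (B.runTo x · a b) (B.layer a) (B.layer b) :=
  surjOn_of_injOn_of_card_le _ (fun _ => runTo_mem x h.le) (h.injOn x)
    (h.card_left.symm ▸ h.card_right_le)

theorem source_mem (h : B.IsSeparated a b) (hv : v ∈ B.layer b) : B.source a b v ∈ B.layer a :=
  Function.invFunOn_mem (h.surjOn _ hv)

theorem runTo_source (h : B.IsSeparated a b) (hv : v ∈ B.layer b) :
    B.runTo (fun _ => false) (B.source a b v) a b = v :=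
  Function.invFunOn_eq (h.surjOn _ hv)

/-- The program `B` with the block between the layers `a` and `b` replaced by a collision-free
one, which keeps track of the vertex of layer `b` that `B` reaches if all remaining bits of the
block are `false`. -/
noncomputable def replace (h : B.IsSeparated a b) : ROBP 3 n where
  V i := if a < i ∧ i < b then B.layer b else B.layer i
  V_nonempty i := by split_ifs <;> exact B.layer_nonempty _
  start := B.start
  start_mem := by
    rw [if_neg (by simp only [Fin.val_zero, not_lt_zero, false_and, not_false_eq_true])]
    exact (B.layer_coe 0).symm ▸ B.start_mem
  trans i β v :=
    if a ≤ i ∧ i < b then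
      B.runTo (probe i fun _ => β) (if (i : ℕ) = a then v else B.source a b v) a b
    else B.trans i β v
  trans_mem i β v hv := by
    simp only [Fin.val_castSucc, Fin.val_succ] at hv ⊢
    by_cases hi : a ≤ i ∧ i < b
    · have hmem : (if (i : ℕ) = a then v else B.source a b v) ∈ B.layer a := by
        split_ifs with hia
        · rwa [if_neg (by omega), hia] at hv
        · rw [if_pos (by omega)] at hv
          exact h.source_mem hv
      rw [if_pos hi]
      obtain hib | rfl := (Nat.succ_le_of_lt hi.2).lt_or_eq
      · rw [if_pos (by omega)]
        exact runTo_mem _ h.le hmem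
      · rw [if_neg (by omega)]
        exact runTo_mem _ h.le hmem
    · rw [if_neg hi, if_neg (by omega), ← B.runTo_succ (fun _ => β) v i.2]
      rw [if_neg (by omega)] at hv
      exact runTo_mem _ i.1.le_succ hv
  accept := B.accept

theorem layer_replace (h : B.IsSeparated a b) (i : ℕ) :
    h.replace.layer i = if a < i ∧ i < b then B.layer b else B.layer i := by
  have hb := h.le_length
  obtain hi | hi := le_total i n
  · rw [layer_of_le _ hi]
    rfl
  · rw [if_neg (by omega)]
    change (if _ then _ else B.layer (min i n)) = _
    rw [if_neg (by simp only; omega), layer, layer]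
    simp only [min_assoc, min_self]

theorem runTo_succ_replace (h : B.IsSeparated a b) (x : Fin n → Bool) (v : Fin 3) (i : ℕ) :
    h.replace.runTo x v i (i + 1) =
      if a ≤ i ∧ i < b then B.runTo (probe i x) (if i = a then v else B.source a b v) a b
      else B.runTo x v i (i + 1) := by
  obtain hi | hi := lt_or_ge i n
  · rw [runTo_succ _ _ _ hi, runTo_succ _ _ _ hi, ← probe_const ⟨i, hi⟩]
    rfl
  · rw [runTo_of_length_le _ _ _ hi, runTo_of_length_le _ _ _ hi,
      if_neg fun hib => hi.not_gt (hib.2.trans_le h.le_length)]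

theorem agreeOn_replace_left (h : B.IsSeparated a b) : AgreeOn B h.replace 0 a where
  layer_eq i _ hi := by rw [h.layer_replace, if_neg (by omega)]
  runTo_succ_eq x v i _ hi := by rw [h.runTo_succ_replace, if_neg (by omega)]

theorem agreeOn_replace_right (h : B.IsSeparated a b) : AgreeOn B h.replace b n where
  layer_eq i hi _ := by rw [h.layer_replace, if_neg (by omega)]
  runTo_succ_eq x v i hi _ := by rw [h.runTo_succ_replace, if_neg (by omega)]

theorem collisions_replace (h : B.IsSeparated a b) : h.replace.collisions a b = ∅ := by
  rw [collisions_eq_empty_iff]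
  rintro i hai hib ⟨x, u, hu, v, hv, huv, hx⟩
  rw [h.layer_replace] at hu hv
  have hi : a ≤ i ∧ i < b := ⟨hai, hib⟩
  rw [h.runTo_succ_replace, h.runTo_succ_replace, if_pos hi, if_pos hi] at hx
  obtain rfl | hne := eq_or_ne i a
  · rw [if_neg (by omega)] at hu hv
    rw [if_pos rfl, if_pos rfl] at hx
    exact huv (h.injOn _ hu hv hx)
  · rw [if_pos (by omega)] at hu hv
    rw [if_neg hne, if_neg hne] at hx
    refine huv ?_
    rw [← h.runTo_source hu, ← h.runTo_source hv,
      h.injOn _ (h.source_mem hu) (h.source_mem hv) hx]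

theorem runTo_replace_of_lt (h : B.IsSeparated a b) (x : Fin n → Bool) (hv : v ∈ B.layer a)
    (hai : a < i) (hib : i ≤ b) :
    h.replace.runTo x v a i = B.runTo (splice i x fun _ => false) v a b := by
  induction i, hai using Nat.le_induction with
  | base =>
    rw [h.runTo_succ_replace, if_pos ⟨le_rfl, hib⟩, if_pos rfl]
    refine h.runTo_probe hv hv le_rfl hib ?_
    rw [runTo_splice _ _ _ _ le_rfl h.le, runTo_of_le _ x _ le_rfl]
  | succ i hai ih =>
    have hmem := runTo_mem (splice i x fun _ => false) h.le hv
    rw [← runTo_runTo _ _ _ (Nat.le_of_succ_le hai) i.le_succ, ih (Nat.le_of_succ_le hib),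
      h.runTo_succ_replace, if_pos ⟨Nat.le_of_succ_le hai, hib⟩, if_neg (by omega)]
    exact h.runTo_probe (h.source_mem hmem) hv (Nat.le_of_succ_le hai) hib (h.runTo_source hmem)

theorem runTo_replace (h : B.IsSeparated a b) (x : Fin n → Bool) (hv : v ∈ B.layer a) :
    h.replace.runTo x v a b = B.runTo x v a b := by
  obtain rfl | hab := h.le.eq_or_lt
  · rw [runTo_of_le _ _ _ le_rfl, runTo_of_le _ _ _ le_rfl]
  · rw [h.runTo_replace_of_lt x hv hab le_rfl, runTo_splice_of_le _ _ _ _ le_rfl]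

theorem avgEval_replace (h : B.IsSeparated a b) : h.replace.avgEval = B.avgEval := by
  funext x
  have hV : h.replace.V 0 = B.V 0 := by
    rw [← layer_coe, ← layer_coe]
    exact (h.agreeOn_replace_left.layer_eq 0 le_rfl a.zero_le).symm
  have hrun : ∀ v ∈ B.V 0, h.replace.runTo x v 0 n = B.runTo x v 0 n := by
    intro v hv
    have hmem := runTo_mem x a.zero_le ((B.layer_coe 0).symm ▸ hv)
    rw [← runTo_runTo _ _ _ (a.zero_le.trans h.le) h.le_length,
      ← runTo_runTo _ _ _ a.zero_le h.le, ← h.agreeOn_replace_left.runTo_eq,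
      h.runTo_replace x hmem, ← h.agreeOn_replace_right.runTo_eq, runTo_runTo _ _ _ a.zero_le h.le,
      runTo_runTo _ _ _ (a.zero_le.trans h.le) h.le_length]
  rw [avgEval, avgEval, hV]
  congr 1
  exact sum_congr rfl fun v hv => by rw [hrun v hv]; rfl

end IsSeparated

end Replacement

section Normalization

variable {n ℓ m : ℕ} {B B' : ROBP 3 n} {a b : ℕ}

/-- A block in which some input merges all computation paths. -/
structure IsMergingBlock (B : ROBP 3 n) (ℓ a b : ℕ) : Prop extends B.IsBlock ℓ a b where
  exists_merges : ∃ x, B.Merges x a b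

/-- The relation of bounding a merging block. -/
def mergingRel (B : ROBP 3 n) (ℓ : ℕ) : SetRel ℕ ℕ := {ab | B.IsMergingBlock ℓ ab.1 ab.2}

/-- A block that is collision-free or merging. -/
structure IsNormalBlock (B : ROBP 3 n) (ℓ a b : ℕ) : Prop extends B.IsBlock ℓ a b where
  collisions_eq_empty_or_exists_merges : B.collisions a b = ∅ ∨ ∃ x, B.Merges x a b

/-- The relation of bounding a normal block. -/
def normalRel (B : ROBP 3 n) (ℓ : ℕ) : SetRel ℕ ℕ := {ab | B.IsNormalBlock ℓ ab.1 ab.2}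

theorem AgreeOn.isNormalBlock (h : AgreeOn B B' a b) (hB : B.IsNormalBlock ℓ a b) :
    B'.IsNormalBlock ℓ a b where
  toIsBlock := h.isBlock hB.toIsBlock
  collisions_eq_empty_or_exists_merges :=
    hB.collisions_eq_empty_or_exists_merges.imp h.collisions_eq.symm.trans
      (Exists.imp fun _ => h.merges hB.le)

theorem merges_of_runTo_eq {x : Fin n → Bool} {u v : Fin 3} (ha : #(B.layer a) ≤ 2)
    (hu : u ∈ B.layer a) (hv : v ∈ B.layer a) (huv : u ≠ v)
    (h : B.runTo x u a b = B.runTo x v a b) : B.Merges x a b := by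
  have hr : ∀ r ∈ B.layer a, B.runTo x r a b = B.runTo x u a b := by
    intro r hr
    obtain rfl | hru := eq_or_ne r u
    · rfl
    · rw [eq_of_ne_of_card_le_two ha hu hr hv hru huv.symm, h]
  intro r hr' s hs
  rw [hr r hr', hr s hs]

theorem merges_of_card_le_one (x : Fin n → Bool) (ha : #(B.layer a) ≤ 1) : B.Merges x a b :=
  fun u hu v hv => by rw [card_le_one.1 ha u hu v hv]

theorem IsBlock.isSeparated (h : B.IsBlock ℓ a b) (hb : b ≤ n) (hx : ∀ x, ¬ B.Merges x a b) :
    B.IsSeparated a b where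
  le := h.le
  le_length := hb
  card_left := h.card_left_le.antisymm <|
    not_lt.1 fun ha => hx (fun _ => false) (merges_of_card_le_one _ (Nat.le_of_lt_succ ha))
  card_right_le := h.card_right_le
  injOn x _ hu _ hv h' := by_contra fun huv => hx x (merges_of_runTo_eq h.card_left_le hu hv huv h')

theorem IsSeparated.isNormalBlock_replace (h : B.IsSeparated a b) :
    h.replace.IsNormalBlock ℓ a b where
  le := h.le
  card_left_le :=
    h.agreeOn_replace_left.layer_eq a a.zero_le le_rfl ▸ h.card_left.le
  card_right_le := h.agreeOn_replace_right.layer_eq b le_rfl h.le_length ▸ h.card_right_le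
  card_collisions_le := by rw [h.collisions_replace]; exact ℓ.zero_le
  collisions_eq_empty_or_exists_merges := Or.inl h.collisions_replace

theorem exists_isNormalBlock {c : Fin (m + 1) → ℕ} (hc : Monotone c) (hcn : ∀ k, c k ≤ n)
    (j : Fin m) (hB : B.IsBlock ℓ (c j.castSucc) (c j.succ)) :
    ∃ B' : ROBP 3 n, B'.avgEval = B.avgEval ∧ B'.layer 0 = B.layer 0 ∧ B'.layer n = B.layer n ∧
      B'.IsNormalBlock ℓ (c j.castSucc) (c j.succ) ∧
      ∀ k, k ≠ j → AgreeOn B B' (c k.castSucc) (c k.succ) := by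
  by_cases hx : ∃ x, B.Merges x (c j.castSucc) (c j.succ)
  · exact ⟨B, rfl, rfl, rfl, ⟨hB, Or.inr hx⟩, fun k _ => ⟨fun _ _ _ => rfl, fun _ _ _ _ _ => rfl⟩⟩
  have h := hB.isSeparated (hcn _) (not_exists.1 hx)
  refine ⟨h.replace, h.avgEval_replace, (h.agreeOn_replace_left.layer_eq _ le_rfl zero_le).symm,
    (h.agreeOn_replace_right.layer_eq _ (hcn _) le_rfl).symm, h.isNormalBlock_replace,
    fun k hk => ?_⟩
  obtain hkj | hjk := hk.lt_or_gt
  · exact h.agreeOn_replace_left.mono zero_le (hc (Fin.succ_le_castSucc_iff.2 hkj))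
  · exact h.agreeOn_replace_right.mono (hc (Fin.succ_le_castSucc_iff.2 hjk)) (hcn _)

theorem exists_normalRel_series (p : RelSeries (B.blockRel ℓ)) (hlast : p.last = n) :
    ∃ B' : ROBP 3 n, B'.avgEval = B.avgEval ∧ B'.layer 0 = B.layer 0 ∧ B'.layer n = B.layer n ∧
      ∃ q : RelSeries (B'.normalRel ℓ), q.head = p.head ∧ q.last = p.last := by
  have hmono := monotone_relSeries p
  have hle (k) : p k ≤ n := (hmono (Fin.le_last k)).trans_eq hlast
  suffices ∀ s : Finset (Fin p.length), ∃ B' : ROBP 3 n, B'.avgEval = B.avgEval ∧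
      B'.layer 0 = B.layer 0 ∧ B'.layer n = B.layer n ∧
      (∀ j : Fin p.length, B'.IsBlock ℓ (p j.castSucc) (p j.succ)) ∧
      ∀ j ∈ s, B'.IsNormalBlock ℓ (p j.castSucc) (p j.succ) by
    obtain ⟨B', heval, h0, hn, -, hnormal⟩ := this univ
    exact ⟨B', heval, h0, hn, ⟨p.length, p, fun j => hnormal j (mem_univ j)⟩, rfl, rfl⟩
  intro s
  induction s using Finset.induction with
  | empty => exact ⟨B, rfl, rfl, rfl, p.step, fun j hj => absurd hj (notMem_empty j)⟩
  | insert j s _ ih =>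
    obtain ⟨B₁, heval₁, h0₁, hn₁, hblock₁, hnormal₁⟩ := ih
    obtain ⟨B₂, heval₂, h0₂, hn₂, hj, hagree⟩ := exists_isNormalBlock hmono hle j (hblock₁ j)
    refine ⟨B₂, heval₂.trans heval₁, h0₂.trans h0₁, hn₂.trans hn₁, fun k => ?_, fun k hk => ?_⟩ <;>
      obtain rfl | hkj := eq_or_ne k j
    · exact hj.toIsBlock
    · exact (hagree k hkj).isBlock (hblock₁ k)
    · exact hj
    · exact (hagree k hkj).isNormalBlock (hnormal₁ k (mem_of_mem_insert_of_ne hk hkj))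

-- Read from the right, every block without an input that merges it is absorbed into the next
-- merging block, which only gains collision-free layers.
theorem exists_mergingRel_series_of_normalRel (p : RelSeries (B.normalRel ℓ))
    (hp : #(B.layer p.last) ≤ 2) (M : ℕ) :
    ∃ q : RelSeries (B.mergingRel ℓ), q.length ≤ M ∧ q.last = p.last ∧ p.head ≤ q.head ∧
      #(B.layer q.head) ≤ 2 ∧ (q.length < M → B.collisions p.head q.head = ∅) := by
  induction p using RelSeries.inductionOn with
  | singleton a =>
    exact ⟨RelSeries.singleton _ a, M.zero_le, rfl, le_rfl, hp, fun _ => B.collisions_self a⟩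
  | cons p a h ih =>
    rw [p.last_cons] at hp ⊢
    rw [p.head_cons]
    obtain ⟨q, hlen, hlast, hhead, hcard, hcol⟩ := ih hp
    have hle : a ≤ q.head := h.le.trans hhead
    obtain rfl | hlt := hlen.eq_or_lt
    · exact ⟨q, le_rfl, hlast, hle, hcard, fun hq => absurd hq (lt_irrefl _)⟩
    have hunion := B.collisions_union h.le hhead
    rw [hcol hlt, union_empty] at hunion
    obtain hfree | ⟨x, hx⟩ := h.collisions_eq_empty_or_exists_merges
    · exact ⟨q, hlen, hlast, hle, hcard, fun _ => hunion.symm.trans hfree⟩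
    · have hmerging : B.IsMergingBlock ℓ a q.head :=
        ⟨⟨hle, h.card_left_le, hcard, hunion ▸ h.card_collisions_le⟩, x, hx.mono le_rfl h.le hhead⟩
      refine ⟨q.cons a hmerging, ?_, (q.last_cons a hmerging).trans hlast, le_rfl, h.card_left_le,
        fun _ => B.collisions_self a⟩
      exact (q.cons_length a hmerging).trans_le hlt

end Normalization

section Meeting

variable {n ℓ : ℕ} {B : ROBP 3 n} {a b k t : ℕ} {p q u v : Fin 3}

/-- The vertex of a width-3 layer different from the two distinct vertices `u` and `v`. -/
def third (u v : Fin 3) : Fin 3 := -(u + v)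

theorem third_add (huv : u ≠ v) :
    third u v + 1 = u ∧ third u v + 2 = v ∨ third u v + 1 = v ∧ third u v + 2 = u := by
  revert huv
  decide +revert

theorem third_map {f : Fin 3 → Fin 3} (hf : Function.Injective f) (w : Fin 3) :
    third (f (w + 1)) (f (w + 2)) = f w := by
  revert hf
  decide +revert

/-- `k` is the least number of steps after which computation paths from the vertices `p` and `q`
of layer `a` can meet. -/
structure IsMeetingTime (B : ROBP 3 n) (a : ℕ) (p q : Fin 3) (k : ℕ) : Prop where
  add_le : a + k ≤ n
  left_mem : p ∈ B.layer a
  right_mem : q ∈ B.layer a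
  ne : ∀ x, ∀ t < k, B.runTo x p a (a + t) ≠ B.runTo x q a (a + t)
  exists_eq : ∃ x, B.runTo x p a (a + k) = B.runTo x q a (a + k)

/-- Encoding of an unordered pair of vertices after `t` steps: before time `k` the vertices are
distinct and determined by the third vertex of their layer; at time `k`, `0` means that they
coincide. -/
def pairCode (k t : ℕ) (u v : Fin 3) : Fin 3 :=
  if t < k then third u v else if u = v then 0 else 1

theorem pairCode_comm (k t : ℕ) (u v : Fin 3) : pairCode k t u v = pairCode k t v u := by
  simp only [pairCode, third, add_comm, eq_comm]

/-- Encoding of the pair of vertices reached after `t` steps from the vertices `p` and `q` of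
layer `a`. -/
def pairState (B : ROBP 3 n) (a : ℕ) (p q : Fin 3) (k : ℕ) (x : Fin n → Bool) (t : ℕ) : Fin 3 :=
  pairCode k t (B.runTo x p a (a + t)) (B.runTo x q a (a + t))

namespace IsMeetingTime

theorem pairState_add (h : B.IsMeetingTime a p q k) (ht : t < k) (x : Fin n → Bool) :
    B.pairState a p q k x t + 1 = B.runTo x p a (a + t) ∧
        B.pairState a p q k x t + 2 = B.runTo x q a (a + t) ∨
      B.pairState a p q k x t + 1 = B.runTo x q a (a + t) ∧
        B.pairState a p q k x t + 2 = B.runTo x p a (a + t) := by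
  rw [pairState, pairCode, if_pos ht]
  exact third_add (h.ne x t ht)

theorem pairState_succ (h : B.IsMeetingTime a p q k) (ht : t < k) (x : Fin n → Bool) :
    B.pairState a p q k x (t + 1) =
      pairCode k (t + 1) (B.runTo x (B.pairState a p q k x t + 1) (a + t) (a + t + 1))
        (B.runTo x (B.pairState a p q k x t + 2) (a + t) (a + t + 1)) := by
  have hsucc (v) :
      B.runTo x (B.runTo x v a (a + t)) (a + t) (a + t + 1) = B.runTo x v a (a + (t + 1)) :=
    B.runTo_runTo x v (a.le_add_right t) (a + t).le_succ
  obtain ⟨h₁, h₂⟩ | ⟨h₁, h₂⟩ := h.pairState_add ht x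
  · rw [h₁, h₂, hsucc, hsucc, pairState]
  · rw [h₁, h₂, hsucc, hsucc, pairState, pairCode_comm]

theorem pairState_add_mem (h : B.IsMeetingTime a p q k) (ht : t < k) (x : Fin n → Bool) :
    B.pairState a p q k x t + 1 ∈ B.layer (a + t) ∧
      B.pairState a p q k x t + 2 ∈ B.layer (a + t) := by
  have hp := runTo_mem x (a.le_add_right t) h.left_mem
  have hq := runTo_mem x (a.le_add_right t) h.right_mem
  obtain ⟨h₁, h₂⟩ | ⟨h₁, h₂⟩ := h.pairState_add ht x
  · exact ⟨h₁ ▸ hp, h₂ ▸ hq⟩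
  · exact ⟨h₁ ▸ hq, h₂ ▸ hp⟩

/-- The program that follows the computation paths of `B` from `p` and `q` simultaneously and
accepts if they have met after `k` steps. -/
def pairProgram (h : B.IsMeetingTime a p q k) : ROBP 3 k where
  V t := univ.image (B.pairState a p q k · t)
  V_nonempty _ := univ_nonempty.image _
  start := B.pairState a p q k (fun _ => false) 0
  start_mem := mem_image_of_mem _ (mem_univ _)
  trans t β w := pairCode k (t + 1) (B.runTo (fun _ => β) (w + 1) (a + t) (a + t + 1))
    (B.runTo (fun _ => β) (w + 2) (a + t) (a + t + 1))
  trans_mem t β w hw := by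
    obtain ⟨x, -, rfl⟩ := mem_image.1 hw
    refine mem_image.2 ⟨splice (a + t) x fun _ => β, mem_univ _, ?_⟩
    rw [Fin.val_succ, h.pairState_succ t.2, pairState, runTo_splice_of_le _ _ _ _ le_rfl,
      runTo_splice_of_le _ _ _ _ le_rfl, runTo_splice _ _ _ _ le_rfl (Nat.le_succ _),
      runTo_of_le _ x _ le_rfl, runTo_splice _ _ _ _ le_rfl (Nat.le_succ _),
      runTo_of_le _ x _ le_rfl]
    rfl
  accept w := w = 0

/-- The position in `B` of the `j`-th bit read by `pairProgram`. -/
def index (h : B.IsMeetingTime a p q k) (j : Fin k) : Fin n :=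
  ⟨a + j, by have := h.add_le; omega⟩

theorem index_injective (h : B.IsMeetingTime a p q k) : Function.Injective h.index :=
  fun _ _ hij => Fin.ext (Nat.add_left_cancel (congrArg Fin.val hij))

theorem layer_pairProgram (h : B.IsMeetingTime a p q k) (ht : t ≤ k) :
    h.pairProgram.layer t = univ.image (B.pairState a p q k · t) :=
  layer_of_le _ ht

theorem runTo_succ_pairProgram (h : B.IsMeetingTime a p q k) (ht : t < k) (x : Fin n → Bool)
    (w : Fin 3) :
    h.pairProgram.runTo (x ∘ h.index) w t (t + 1) =
      pairCode k (t + 1) (B.runTo x (w + 1) (a + t) (a + t + 1))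
        (B.runTo x (w + 2) (a + t) (a + t + 1)) := by
  have hcongr (v) : B.runTo (fun _ => x (h.index ⟨t, ht⟩)) v (a + t) (a + t + 1) =
      B.runTo x v (a + t) (a + t + 1) :=
    B.runTo_congr_input v fun l hl hl' =>
      congrArg x (Fin.ext (hl.antisymm (Nat.le_of_lt_succ hl')))
  rw [runTo_succ _ _ _ ht, ← hcongr, ← hcongr]
  rfl

theorem runTo_pairProgram (h : B.IsMeetingTime a p q k) (ht : t ≤ k) (x : Fin n → Bool) :
    h.pairProgram.runTo (x ∘ h.index) h.pairProgram.start 0 t = B.pairState a p q k x t := by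
  induction t with
  | zero =>
    rw [runTo_of_le _ _ _ le_rfl]
    simp only [pairProgram, pairState, add_zero, runTo_of_le _ _ _ (le_refl a)]
  | succ t ih =>
    rw [← runTo_runTo _ _ _ t.zero_le t.le_succ, ih (Nat.le_of_succ_le ht),
      h.runTo_succ_pairProgram ht, h.pairState_succ ht]

theorem accept_pairProgram (h : B.IsMeetingTime a p q k) (x : Fin n → Bool) :
    h.pairProgram.accept (h.pairProgram.run (x ∘ h.index)) = true ↔
      B.runTo x p a (a + k) = B.runTo x q a (a + k) := by
  rw [run, h.runTo_pairProgram le_rfl, pairState, pairCode, if_neg (lt_irrefl k)]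
  simp [pairProgram]

theorem collidesAt_last (h : B.IsMeetingTime a p q (k + 1)) : B.CollidesAt (a + k) := by
  obtain ⟨x, hx⟩ := h.exists_eq
  refine ⟨x, _, runTo_mem x (a.le_add_right k) h.left_mem, _,
    runTo_mem x (a.le_add_right k) h.right_mem, h.ne x k k.lt_succ_self, ?_⟩
  rwa [B.runTo_runTo x p (a.le_add_right k) (a + k).le_succ,
    B.runTo_runTo x q (a.le_add_right k) (a + k).le_succ]

-- Before the last step two distinct pairs exhaust the three vertices of the layer of `B`, whose
-- edges therefore permute them unless two of them collide.
theorem collidesAt_of_pairProgram (h : B.IsMeetingTime a p q k)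
    (hc : h.pairProgram.CollidesAt t) : B.CollidesAt (a + t) := by
  have ht : t < k := hc.lt
  obtain ⟨y, w, hw, w', hw', hne, heq⟩ := hc
  obtain ⟨x, rfl⟩ := h.index_injective.surjective_comp_right y
  obtain hlt | rfl := (Nat.succ_le_of_lt ht).lt_or_eq
  swap
  · exact h.collidesAt_last
  rw [h.layer_pairProgram ht.le] at hw hw'
  obtain ⟨z, -, rfl⟩ := mem_image.1 hw
  obtain ⟨z', -, rfl⟩ := mem_image.1 hw'
  have hmem : ∀ r, r ∈ B.layer (a + t) := by
    intro r
    have hcover : ∀ {w w' : Fin 3}, w ≠ w' → ∀ r, r = w + 1 ∨ r = w + 2 ∨ r = w' + 1 ∨ r = w' + 2 :=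
      by decide
    obtain ⟨h₁, h₂⟩ := h.pairState_add_mem ht z
    obtain ⟨h₁', h₂'⟩ := h.pairState_add_mem ht z'
    obtain rfl | rfl | rfl | rfl := hcover hne r <;> assumption
  by_contra hB
  have hinj : Function.Injective (B.runTo x · (a + t) (a + t + 1)) := fun u v huv =>
    by_contra fun hne => hB ⟨x, u, hmem u, v, hmem v, hne, huv⟩
  rw [h.runTo_succ_pairProgram ht, h.runTo_succ_pairProgram ht, pairCode, pairCode, if_pos hlt,
    if_pos hlt, third_map hinj, third_map hinj] at heq
  exact hne (hinj heq)

theorem isDecomp_pairProgram (h : B.IsMeetingTime a p q k) (hk : a + k ≤ b)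
    (hB : B.IsBlock ℓ a b) : h.pairProgram.IsDecomp ℓ 1 := by
  refine IsBlock.isDecomp ⟨k.zero_le, ?_, ?_, ?_⟩
  · refine (card_le_one.2 fun u hu v hv => ?_).trans one_le_two
    rw [h.layer_pairProgram k.zero_le] at hu hv
    obtain ⟨x, -, rfl⟩ := mem_image.1 hu
    obtain ⟨y, -, rfl⟩ := mem_image.1 hv
    simp only [pairState, add_zero, runTo_of_le _ _ _ (le_refl a)]
  · rw [h.layer_pairProgram le_rfl]
    refine (card_le_card fun w hw => ?_).trans (card_le_two (a := 0) (b := 1))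
    obtain ⟨x, -, rfl⟩ := mem_image.1 hw
    rw [pairState, pairCode, if_neg (lt_irrefl k)]
    split_ifs <;> simp
  · refine (card_le_card_of_injOn (a + ·) (fun t ht => ?_) fun _ _ _ _ => Nat.add_left_cancel).trans
      hB.card_collisions_le
    obtain ⟨⟨-, htk⟩, hc⟩ := mem_collisions.1 ht
    exact mem_collisions.2 ⟨⟨a.le_add_right t, (Nat.add_lt_add_left htk a).trans_le hk⟩,
      h.collidesAt_of_pairProgram hc⟩

end IsMeetingTime

theorem exists_isMeetingTime {x : Fin n → Bool} (hb : a + b ≤ n) (hp : p ∈ B.layer a)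
    (hq : q ∈ B.layer a) (hx : B.runTo x p a (a + b) = B.runTo x q a (a + b)) :
    ∃ k ≤ b, B.IsMeetingTime a p q k := by
  classical
  have hmeet : ∃ k, ∃ x, B.runTo x p a (a + k) = B.runTo x q a (a + k) := ⟨b, x, hx⟩
  have hle : Nat.find hmeet ≤ b := Nat.find_min' hmeet ⟨x, hx⟩
  exact ⟨Nat.find hmeet, hle, by omega, hp, hq,
    fun y t ht => not_exists.1 (Nat.find_min hmeet ht) y, Nat.find_spec hmeet⟩

theorem IsMergingBlock.exists_event (hB : B.IsMergingBlock ℓ a b) (hb : b ≤ n) :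
    ∃ F : (Fin n → Bool) → Prop, (∃ x, F x) ∧
      Event31 ℓ ({i | a ≤ (i : ℕ) ∧ (i : ℕ) < b} : Finset (Fin n)) F ∧
        ∀ x, F x → B.Merges x a b := by
  obtain ⟨p, hp, q, hq, hpq⟩ :=
    exists_forall_eq_or_eq_of_card_le_two hB.card_left_le (B.layer_nonempty a)
  obtain ⟨x, hx⟩ := hB.exists_merges
  obtain ⟨c, rfl⟩ := Nat.exists_eq_add_of_le hB.le
  obtain ⟨k, hk, h⟩ := exists_isMeetingTime hb hp hq (hx p hp q hq)
  refine ⟨fun x => B.runTo x p a (a + k) = B.runTo x q a (a + k), h.exists_eq,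
    ⟨k, h.index, h.index_injective, fun j => ?_, h.pairProgram,
      h.isDecomp_pairProgram (Nat.add_le_add_left hk a) hB.toIsBlock,
      fun x => (h.accept_pairProgram x).symm⟩, fun x hx => ?_⟩
  · exact mem_filter.2 ⟨mem_univ _, a.le_add_right j,
      Nat.add_lt_add_left (j.2.trans_le hk) a⟩
  · refine Merges.mono (fun u hu v hv => ?_) le_rfl (a.le_add_right k) (Nat.add_le_add_left hk a)
    obtain rfl | rfl := hpq u hu <;> obtain rfl | rfl := hpq v hv
    exacts [rfl, hx, hx.symm, rfl]

end Meeting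

section Error

open scoped BigOperators

variable {w n : ℕ} {B : ROBP w n} {x : Fin n → Bool}

/-- The `±1` value computed by `B` on `x` from the vertex `v` of layer `t`. -/
noncomputable def outcome (B : ROBP w n) (x : Fin n → Bool) (t : ℕ) (v : Fin w) : ℝ :=
  if B.accept (B.runTo x v t n) then -1 else 1

theorem outcome_eq_neg_one_or_one (B : ROBP w n) (x : Fin n → Bool) (t : ℕ) (v : Fin w) :
    B.outcome x t v = -1 ∨ B.outcome x t v = 1 := by
  rw [outcome]
  split_ifs
  exacts [Or.inl rfl, Or.inr rfl]

theorem suffixEval_eq_expect (t : Fin (n + 1)) :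
    B.suffixEval t x = 𝔼 v ∈ B.V t, B.outcome x t v :=
  (expect_eq_sum_div_card _ _).symm

theorem avgEval_eq_expect (t : Fin (n + 1)) :
    B.avgEval x = 𝔼 v ∈ B.V 0, B.outcome x t (B.runTo x v 0 t) := by
  simp only [outcome, runTo_runTo _ _ _ t.1.zero_le (Nat.le_of_lt_succ t.2)]
  exact (expect_eq_sum_div_card _ _).symm

theorem avgEval_eq_suffixEval (t : Fin (n + 1))
    (h : ∀ u ∈ B.V t, ∀ v ∈ B.V t, B.outcome x t u = B.outcome x t v) :
    B.avgEval x = B.suffixEval t x := by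
  obtain ⟨u, hu⟩ := B.V_nonempty t
  have hmem : ∀ v ∈ B.V 0, B.runTo x v 0 t ∈ B.V t := by
    intro v hv
    rw [← layer_coe] at hv ⊢
    exact runTo_mem x t.1.zero_le hv
  rw [avgEval_eq_expect t, suffixEval_eq_expect,
    expect_congr rfl fun v hv => h _ (hmem v hv) u hu, expect_const (B.V_nonempty 0),
    expect_congr rfl fun v hv => h v hv u hu, expect_const (B.V_nonempty t)]

theorem avgEval_eq_suffixEval_of_merges (t : Fin (n + 1)) (h : B.Merges x t n) :
    B.avgEval x = B.suffixEval t x :=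
  avgEval_eq_suffixEval t fun u hu v hv => by
    rw [outcome, outcome, h u ((B.layer_coe t).symm ▸ hu) v ((B.layer_coe t).symm ▸ hv)]

theorem suffixEval_eq_zero {t : Fin (n + 1)} (ht : #(B.V t) ≤ 2) {u v : Fin w} (hu : u ∈ B.V t)
    (hv : v ∈ B.V t) (h : B.outcome x t u ≠ B.outcome x t v) : B.suffixEval t x = 0 := by
  have huv : u ≠ v := fun huv => h (congrArg _ huv)
  have hV : B.V t = {u, v} :=
    (eq_of_subset_of_card_le (insert_subset hu (singleton_subset_iff.2 hv))
      (ht.trans_eq (card_pair huv).symm)).symm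
  have hsum : B.outcome x t u + B.outcome x t v = 0 := by
    obtain hu' | hu' := B.outcome_eq_neg_one_or_one x t u <;>
      obtain hv' | hv' := B.outcome_eq_neg_one_or_one x t v
    · exact absurd (hu'.trans hv'.symm) h
    · rw [hu', hv', neg_add_cancel]
    · rw [hu', hv', add_neg_cancel]
    · exact absurd (hu'.trans hv'.symm) h
  rw [suffixEval_eq_expect, expect_eq_sum_div_card, hV, sum_pair huv, hsum, zero_div]

theorem abs_avgEval_le_one : |B.avgEval x| ≤ 1 := by
  rw [avgEval_eq_expect 0]
  refine (abs_expect_le _ _).trans (expect_le (B.V_nonempty 0) fun v _ => ?_)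
  obtain h | h := B.outcome_eq_neg_one_or_one x (0 : Fin (n + 1)) (B.runTo x v 0 (0 : Fin (n + 1)))
  · rw [h, abs_neg, abs_one]
  · rw [h, abs_one]

theorem abs_avgEval_sub_suffixEval_le_one {t : Fin (n + 1)} (ht : #(B.V t) ≤ 2) :
    |B.avgEval x - B.suffixEval t x| ≤ 1 := by
  by_cases h : ∀ u ∈ B.V t, ∀ v ∈ B.V t, B.outcome x t u = B.outcome x t v
  · rw [avgEval_eq_suffixEval t h, sub_self, abs_zero]
    exact zero_le_one
  · push Not at h
    obtain ⟨u, hu, v, hv, huv⟩ := h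
    rw [suffixEval_eq_zero ht hu hv huv, sub_zero]
    exact abs_avgEval_le_one

theorem abs_avgEval_sub_suffixEval_le_ind {ι : Type*} {F : ι → (Fin n → Bool) → Prop}
    {t : Fin (n + 1)} (ht : #(B.V t) ≤ 2) (hF : ∀ i, F i x → B.Merges x t n) :
    |B.avgEval x - B.suffixEval t x| ≤ ind (∀ i, ¬ F i x) := by
  rw [ind]
  split_ifs with h
  · exact abs_avgEval_sub_suffixEval_le_one ht
  · push Not at h
    obtain ⟨i, hi⟩ := h
    rw [avgEval_eq_suffixEval_of_merges t (hF i hi), sub_self, abs_zero]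

end Error

section MergingSeries

variable {n ℓ m : ℕ} {B : ROBP 3 n}

theorem IsDecomp.exists_mergingRel_series (hB : B.IsDecomp ℓ m) (M : ℕ) :
    ∃ B' : ROBP 3 n, B'.avgEval = B.avgEval ∧ #(B'.layer n) ≤ 2 ∧
      ∃ q : RelSeries (B'.mergingRel ℓ), q.length ≤ M ∧ q.last = n ∧ #(B'.layer q.head) ≤ 2 ∧
        (q.length < M → B'.IsBlock ℓ 0 q.head) := by
  obtain ⟨p, -, hhead, hlast⟩ := hB.exists_relSeries
  obtain ⟨B', heval, h0, hn, r, hrhead, hrlast⟩ := exists_normalRel_series p hlast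
  rw [hhead] at hrhead
  rw [hlast] at hrlast
  have hcard0 : #(B'.layer 0) ≤ 2 := h0 ▸ hB.card_layer_zero_le
  have hcardn : #(B'.layer n) ≤ 2 := hn ▸ hB.card_layer_length_le
  obtain ⟨q, hlen, hqlast, -, hcard, hcol⟩ :=
    exists_mergingRel_series_of_normalRel r (by rwa [hrlast]) M
  rw [hrhead] at hcol
  refine ⟨B', heval, hcardn, q, hlen, hqlast.trans hrlast, hcard, fun hlt =>
    ⟨zero_le, hcard0, hcard, ?_⟩⟩
  rw [hcol hlt]
  exact ℓ.zero_le

theorem isBlock_of_mergingRel (q : RelSeries (B.mergingRel ℓ)) (j : Fin q.length) :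
    B.IsBlock ℓ (q j.castSucc) (q j.succ) :=
  (q.step j).toIsBlock

theorem exists_events (q : RelSeries (B.mergingRel ℓ)) (hlast : q.last = n) :
    ∃ (S : Fin q.length → Finset (Fin n)) (F : Fin q.length → (Fin n → Bool) → Prop),
      (∀ i j, i ≠ j → Disjoint (S i) (S j)) ∧ (∀ i, ∃ x, F i x) ∧
      (∀ i, Event31 ℓ (S i) (F i)) ∧ ∀ x i, F i x → B.Merges x q.head n := by
  have hmono : Monotone q := Fin.monotone_iff_le_succ.2 fun j => (q.step j).le
  have hle (k) : q k ≤ n := (hmono (Fin.le_last k)).trans_eq hlast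
  choose F hne hevent hmerges using fun j => (q.step j).exists_event (hle j.succ)
  refine ⟨_, F, fun i j hij => ?_, hne, hevent, fun x j hx => ?_⟩
  · rw [disjoint_filter]
    obtain hij | hji := hij.lt_or_gt
    · have := hmono (Fin.succ_le_castSucc_iff.2 hij)
      omega
    · have := hmono (Fin.succ_le_castSucc_iff.2 hji)
      omega
  · exact (hmerges j x hx).mono (hmono (Fin.zero_le _)) (q.step j).le (hle _)

end MergingSeries

end ROBP

open ROBP in
theorem struct_colliding_general
    (M : ℕ) (hM : 1 ≤ M) (n ℓ m : ℕ) (B : ROBP 3 n) (hB : B.IsDecomp ℓ m) :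
    ∃ B' : ROBP 3 n, B'.IsDecomp ℓ M ∧
      ∃ E : (Fin n → Bool) → ℝ,
        (∀ x, B.avgEval x = B'.avgEval x + E x) ∧
        ((∀ x, E x = 0) ∨
          ∃ (S : Fin M → Finset (Fin n)) (F : Fin M → (Fin n → Bool) → Prop),
            (∀ i j, i ≠ j → Disjoint (S i) (S j)) ∧
            (∀ i, ∃ x, F i x) ∧
            (∀ i, Event31 ℓ (S i) (F i)) ∧
            (∀ x, |E x| ≤ ind (∀ i, ¬ F i x))) := by
  obtain ⟨B₁, heval, hcardn, q, hlen, hlast, hcard, hfirst⟩ := hB.exists_mergingRel_series M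
  let p : RelSeries (B₁.blockRel ℓ) := ⟨q.length, q, isBlock_of_mergingRel q⟩
  rw [← heval]
  obtain hlt | rfl := hlen.lt_or_eq
  · exact ⟨B₁, (isDecomp_cons p (hfirst hlt) hlast hcardn).mono hlt, 0,
      fun x => (add_zero _).symm, Or.inl fun _ => rfl⟩
  · obtain ⟨S, F, hdisj, hne, hevent, hmerges⟩ := exists_events q hlast
    have hhead : q.head ≤ n := (monotone_relSeries p (Fin.zero_le _)).trans_eq hlast
    let t : Fin (n + 1) := ⟨q.head, Nat.lt_succ_of_le hhead⟩
    refine ⟨B₁.truncate t, isDecomp_truncate p (Nat.ne_of_gt hM) hlast hcardn,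
      fun x => B₁.avgEval x - B₁.suffixEval t x, fun x => ?_, Or.inr ⟨S, F, hdisj, hne, hevent,
      fun x => abs_avgEval_sub_suffixEval_le_ind (B₁.layer_coe t ▸ hcard) (hmerges x)⟩⟩
    rw [avgEval_truncate, add_sub_cancel]

/-- Main structural result: every `(3, ℓ, m)`-ROBP `B` (as a
real-valued function, averaging over its start vertices) can be written as `B' + E`
where `B'` is a `(3, ℓ, C^ℓ)`-ROBP and either `E ≡ 0` or `|E(x)|` is bounded by the
conjunction of negations of `C^ℓ` non-zero events on disjoint variables, each computed
by a `(3, ℓ, 1)`-ROBP. -/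
theorem struct_colliding
    (C : ℕ) (hC : 1 ≤ C) (n ℓ m : ℕ) (B : ROBP 3 n) (hB : B.IsDecomp ℓ m) :
    ∃ B' : ROBP 3 n, B'.IsDecomp ℓ (C ^ ℓ) ∧
      ∃ E : (Fin n → Bool) → ℝ,
        (∀ x, B.avgEval x = B'.avgEval x + E x) ∧
        ((∀ x, E x = 0) ∨
          ∃ (S : Fin (C ^ ℓ) → Finset (Fin n)) (F : Fin (C ^ ℓ) → (Fin n → Bool) → Prop),
            (∀ i j, i ≠ j → Disjoint (S i) (S j)) ∧
            (∀ i, ∃ x, F i x) ∧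
            (∀ i, Event31 ℓ (S i) (F i)) ∧
            (∀ x, |E x| ≤ ind (∀ i, ¬ F i x))) :=
  struct_colliding_general (C ^ ℓ) (Nat.one_le_pow ℓ C hC) n ℓ m B hB
end
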